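/- arXiv:1702.06923 — 4 statements merged into one kernel-verified Lean document; each statement's English description precedes it below -/
import Mathlib

section
/- Let G be a finite group that decomposes as an internal direct product G = N × K of subgroups N and K. Then |M(G)| = |M(N)| · |M(K)| · |N^ab ⊗ K^ab|, where M denotes the Schur multiplier (second integral homology). -/
/-- The canonical presentation map `FreeGroup G →* G`. -/
def presentation (G : Type*) [Group G] : FreeGroup G →* G := FreeGroup.lift id

/-- The Schur multiplier `M(G) ≅ H₂(G, ℤ)` of a group `G`, defined via Hopf's formula
`M(G) = (R ∩ [F,F]) / [F,R]` for the free presentation `F = FreeGroup G`,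
`R = ker(F →* G)`. -/
def SchurMultiplier (G : Type*) [Group G] : Type _ :=
  ↥((presentation G).ker ⊓ commutator (FreeGroup G)) ⧸
    (⁅(⊤ : Subgroup (FreeGroup G)), (presentation G).ker⁆.subgroupOf
      ((presentation G).ker ⊓ commutator (FreeGroup G)))

noncomputable instance (G : Type*) [Group G] : Group (SchurMultiplier G) :=
  QuotientGroup.Quotient.group _

namespace SchurAux

open scoped commutatorElement

/-- `F/[F,R]`. -/
abbrev Cov (G : Type*) [Group G] : Type _ :=
  FreeGroup G ⧸ ⁅(⊤ : Subgroup (FreeGroup G)), (presentation G).ker⁆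

/-- The map `F/[F,R] → G`. -/
def covMap (G : Type*) [Group G] : Cov G →* G :=
  QuotientGroup.lift _ (presentation G) (Subgroup.commutator_le_right _ _)

theorem covMap_mk {G : Type*} [Group G] (x : FreeGroup G) :
    covMap G (x : Cov G) = presentation G x := rfl

theorem covMap_ker {G : Type*} [Group G] : (covMap G).ker ≤ Subgroup.center (Cov G) := by
  intro x hx
  induction x using QuotientGroup.induction_on with
  | H r =>
    rw [MonoidHom.mem_ker, covMap_mk] at hx
    rw [Subgroup.mem_center_iff]
    intro g
    induction g using QuotientGroup.induction_on with
    | H f =>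
      rw [← commutatorElement_eq_one_iff_mul_comm]
      have h : ((⁅f, r⁆ : FreeGroup G) : Cov G) = 1 :=
        (QuotientGroup.eq_one_iff _).2
          (Subgroup.commutator_mem_commutator (Subgroup.mem_top f) (MonoidHom.mem_ker.2 hx))
      exact h

/-- canonical set-theoretic section -/
def sec {G : Type*} [Group G] (g : G) : Cov G := ((FreeGroup.of g : FreeGroup G) : Cov G)

theorem covMap_sec {G : Type*} [Group G] (g : G) : covMap G (sec g) = g := by
  rw [sec, covMap_mk]
  simp [presentation]

theorem exists_lift {G B C : Type*} [Group G] [Group B] [Group C] (f : G →* C) (q : B →* C)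
    (hq : q.ker ≤ Subgroup.center B) (hs : Function.Surjective q) :
    ∃ F : Cov G →* B, ∀ x, q (F x) = f (covMap G x) := by
  choose s hs using hs
  let F0 : FreeGroup G →* B := FreeGroup.lift (fun g => s (f g))
  have h0 : ∀ x, q (F0 x) = f (presentation G x) := by
    intro x
    have : q.comp F0 = f.comp (presentation G) := by
      ext g
      simp [F0, presentation, hs]
    exact DFunLike.congr_fun this x
  refine ⟨QuotientGroup.lift _ F0 ?_, ?_⟩
  · rw [Subgroup.commutator_le]
    intro x _ r hr
    rw [MonoidHom.mem_ker, map_commutatorElement, commutatorElement_eq_one_iff_mul_comm]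
    refine Subgroup.mem_center_iff.1 (hq ?_) _
    rw [MonoidHom.mem_ker] at hr ⊢
    rw [h0, hr, map_one]
  · intro x
    induction x using QuotientGroup.induction_on with
    | H x => exact h0 x

theorem comm_congr {E C : Type*} [Group E] [Group C] (q : E →* C)
    (hq : q.ker ≤ Subgroup.center E) {x x' y y' : E} (hx : q x = q x') (hy : q y = q y') :
    ⁅x, y⁆ = ⁅x', y'⁆ := by
  have key : ∀ {a a' : E}, q a = q a' → ∃ z ∈ Subgroup.center E, a' = a * z := by
    intro a a' h
    exact ⟨a⁻¹ * a', hq (by simp [MonoidHom.mem_ker, h]), by group⟩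
  obtain ⟨z, hz, rfl⟩ := key hx
  obtain ⟨w, hw, rfl⟩ := key hy
  rw [Subgroup.mem_center_iff] at hz hw
  rw [commutatorElement_def, commutatorElement_def, mul_inv_rev, mul_inv_rev]
  have e1 : x * z * (y * w) = x * y * z * w := by
    calc _ = x * (z * y) * w := by group
      _ = x * (y * z) * w := by rw [hz y]
      _ = _ := by group
  have e2 : z * w * (z⁻¹ * x⁻¹ * (w⁻¹ * y⁻¹)) = x⁻¹ * y⁻¹ := by
    have a1 : z * w * z⁻¹ = w := by rw [← hz w]; group
    have a2 : w * x⁻¹ * w⁻¹ = x⁻¹ := by rw [← hw]; group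
    calc _ = (z * w * z⁻¹) * x⁻¹ * w⁻¹ * y⁻¹ := by group
      _ = _ := by rw [a1, a2]
  calc x * y * x⁻¹ * y⁻¹ = x * y * (z * w * (z⁻¹ * x⁻¹ * (w⁻¹ * y⁻¹))) := by rw [e2]; group
    _ = x * y * z * w * (z⁻¹ * x⁻¹) * (w⁻¹ * y⁻¹) := by group
    _ = _ := by rw [e1]

theorem agree {A B C : Type*} [Group A] [Group B] [Group C] (q : B →* C)
    (hq : q.ker ≤ Subgroup.center B) (f g : A →* B) (h : ∀ x, q (f x) = q (g x))
    {x : A} (hx : x ∈ commutator A) : f x = g x := by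
  have : commutator A ≤ f.eqLocus g := by
    rw [commutator_def, Subgroup.commutator_le]
    intro a _ b _
    change f _ = g _
    rw [map_commutatorElement, map_commutatorElement]
    exact comm_congr q hq (h a) (h b)
  exact this hx

/-- `ker π ∩ [E,E]` -/
abbrev mult {E G : Type*} [Group E] [Group G] (p : E →* G) : Subgroup E := p.ker ⊓ commutator E

theorem map_mem_commutator {A B : Type*} [Group A] [Group B] (f : A →* B) {x : A}
    (hx : x ∈ commutator A) : f x ∈ commutator B := by
  have h : (commutator A).map f ≤ commutator B := by
    rw [commutator_def, commutator_def, Subgroup.map_commutator]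
    exact Subgroup.commutator_mono le_top le_top
  exact h (Subgroup.mem_map_of_mem f hx)

theorem card_mult_eq {E E' G : Type*} [Group E] [Group E'] [Group G] (p : E →* G) (p' : E' →* G)
    (hp : p.ker ≤ Subgroup.center E) (hp' : p'.ker ≤ Subgroup.center E')
    (a : E →* E') (b : E' →* E) (ha : ∀ x, p' (a x) = p x) (hb : ∀ x, p (b x) = p' x) :
    Nat.card (mult p) = Nat.card (mult p') := by
  refine Nat.card_congr
    { toFun := fun x => ⟨a x.1, ?_, map_mem_commutator a x.2.2⟩
      invFun := fun x => ⟨b x.1, ?_, map_mem_commutator b x.2.2⟩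
      left_inv := ?_
      right_inv := ?_ }
  · exact (ha x.1).trans x.2.1
  · exact (hb x.1).trans x.2.1
  · intro x
    exact Subtype.ext (agree p hp (b.comp a) (MonoidHom.id E) (fun y => by simp [ha, hb]) x.2.2)
  · intro x
    exact Subtype.ext (agree p' hp' (a.comp b) (MonoidHom.id E') (fun y => by simp [ha, hb]) x.2.2)

theorem card_schur (G : Type*) [Group G] :
    Nat.card (SchurMultiplier G) = Nat.card (mult (covMap G)) := by
  let S := (presentation G).ker ⊓ commutator (FreeGroup G)
  let C := ⁅(⊤ : Subgroup (FreeGroup G)), (presentation G).ker⁆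
  let f : S →* Cov G := (QuotientGroup.mk' C).comp S.subtype
  have hk : f.ker = C.subgroupOf S := by
    ext x
    rw [MonoidHom.mem_ker, Subgroup.mem_subgroupOf]
    exact QuotientGroup.eq_one_iff _
  have hr : f.range = mult (covMap G) := by
    ext x
    constructor
    · rintro ⟨y, rfl⟩
      exact ⟨y.2.1, map_mem_commutator (QuotientGroup.mk' C) y.2.2⟩
    · rintro ⟨h1, h2⟩
      have h3 : commutator (Cov G) ≤ (commutator (FreeGroup G)).map (QuotientGroup.mk' C) := by
        rw [commutator_def, commutator_def, Subgroup.map_commutator,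
          Subgroup.map_top_of_surjective _ (QuotientGroup.mk'_surjective C)]
      obtain ⟨y, hy, rfl⟩ := h3 h2
      exact ⟨⟨y, h1, hy⟩, rfl⟩
  rw [← hr]
  have e := QuotientGroup.quotientKerEquivRange f
  rw [← Nat.card_congr e.toEquiv]
  change Nat.card (S ⧸ C.subgroupOf S) = _
  rw [hk]

/-- twisted product -/
@[ext] structure Tw {A B T : Type*} [Group A] [Group B] [CommGroup T] (β : A →* B →* T) where
  a : A
  b : B
  t : T

section
variable {A B T : Type*} [Group A] [Group B] [CommGroup T] (β : A →* B →* T)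

instance : Mul (Tw β) := ⟨fun x y => ⟨x.a * y.a, x.b * y.b, x.t * y.t * β y.a x.b⟩⟩
instance : One (Tw β) := ⟨⟨1, 1, 1⟩⟩
instance : Inv (Tw β) := ⟨fun x => ⟨x.a⁻¹, x.b⁻¹, x.t⁻¹ * β x.a x.b⟩⟩

@[simp] theorem mul_a (x y : Tw β) : (x * y).a = x.a * y.a := rfl
@[simp] theorem mul_b (x y : Tw β) : (x * y).b = x.b * y.b := rfl
@[simp] theorem mul_t (x y : Tw β) : (x * y).t = x.t * y.t * β y.a x.b := rfl
@[simp] theorem one_a : (1 : Tw β).a = 1 := rfl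
@[simp] theorem one_b : (1 : Tw β).b = 1 := rfl
@[simp] theorem one_t : (1 : Tw β).t = 1 := rfl
@[simp] theorem inv_a (x : Tw β) : (x⁻¹).a = x.a⁻¹ := rfl
@[simp] theorem inv_b (x : Tw β) : (x⁻¹).b = x.b⁻¹ := rfl
@[simp] theorem inv_t (x : Tw β) : (x⁻¹).t = x.t⁻¹ * β x.a x.b := rfl

instance : Group (Tw β) :=
  Group.ofLeftAxioms
    (by
      intro x y z
      ext
      · simp [mul_assoc]
      · simp [mul_assoc]
      · simp only [mul_t, mul_a, mul_b, map_mul, MonoidHom.mul_apply]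
        generalize β z.a x.b = p
        generalize β z.a y.b = q
        generalize β y.a x.b = r
        generalize x.t = s
        generalize y.t = t
        generalize z.t = u
        simp only [mul_assoc, mul_comm, mul_left_comm])
    (by intro x; ext <;> simp)
    (by intro x; ext <;> simp)

/-- first inclusion -/
def inA : A →* Tw β where
  toFun a := ⟨a, 1, 1⟩
  map_one' := rfl
  map_mul' x y := by ext <;> simp

/-- second inclusion -/
def inB : B →* Tw β where
  toFun b := ⟨1, b, 1⟩
  map_one' := rfl
  map_mul' x y := by ext <;> simp

/-- third inclusion -/
def inT : T →* Tw β where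
  toFun t := ⟨1, 1, t⟩
  map_one' := rfl
  map_mul' x y := by ext <;> simp

/-- first projection -/
def prA : Tw β →* A where
  toFun x := x.a
  map_one' := rfl
  map_mul' x y := rfl

/-- second projection -/
def prB : Tw β →* B where
  toFun x := x.b
  map_one' := rfl
  map_mul' x y := rfl

theorem mem_commutator_iff (hT : Subgroup.closure {t | ∃ a b, β a b = t} = ⊤) (x : Tw β) :
    x ∈ commutator (Tw β) ↔ x.a ∈ commutator A ∧ x.b ∈ commutator B := by
  constructor
  · intro h
    exact ⟨map_mem_commutator (prA β) h, map_mem_commutator (prB β) h⟩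
  · rintro ⟨h1, h2⟩
    have hx : x = inT β (x.t) * inA β x.a * inB β x.b := by
      ext <;> simp [inT, inA, inB]
    have ht : ∀ t : T, inT β t ∈ commutator (Tw β) := by
      intro t
      have : (⊤ : Subgroup T) ≤ (commutator (Tw β)).comap (inT β) := by
        rw [← hT, Subgroup.closure_le]
        rintro _ ⟨a, b, rfl⟩
        have : inT β (β a b) = ⁅inB β b, inA β a⁆ := by
          rw [eq_comm, commutatorElement_def, mul_inv_eq_iff_eq_mul, mul_inv_eq_iff_eq_mul]
          ext <;> simp [inT, inA, inB]
        change inT β (β a b) ∈ commutator (Tw β)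
        rw [this]
        exact Subgroup.commutator_mem_commutator (Subgroup.mem_top _) (Subgroup.mem_top _)
      exact this (Subgroup.mem_top t)
    rw [hx]
    exact mul_mem (mul_mem (ht _) (map_mem_commutator _ h1)) (map_mem_commutator _ h2)

end

/-- Pairing into a commutative group, extended to the tensor product of abelianizations. -/
theorem exists_tensor_lift {N K Z : Type*} [Group N] [Group K] [CommGroup Z] (γ : N →* K →* Z) :
    ∃ τ : Multiplicative (TensorProduct ℤ (Additive (Abelianization N))
          (Additive (Abelianization K))) →* Z,
      ∀ n k, τ (Multiplicative.ofAdd (TensorProduct.tmul ℤ (Additive.ofMul (Abelianization.of n))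
        (Additive.ofMul (Abelianization.of k)))) = γ n k := by
  let γ1 : Abelianization N →* (Abelianization K →* Z) :=
    Abelianization.lift
      { toFun := fun n => Abelianization.lift (γ n)
        map_one' := by ext; simp
        map_mul' := by intros; ext; simp }
  let γ2 : Additive (Abelianization N) →+ Additive (Abelianization K) →+ Additive Z :=
    { toFun := fun n => MonoidHom.toAdditive (γ1 n.toMul)
      map_zero' := by ext; simp
      map_add' := by intros; ext; simp }
  let τ : TensorProduct ℤ (Additive (Abelianization N)) (Additive (Abelianization K)) →+
      Additive Z := TensorProduct.liftAddHom γ2 (by intros; simp)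
  refine ⟨AddMonoidHom.toMultiplicativeLeft τ, ?_⟩
  intro n k
  simp [τ, γ2, γ1]

/-- The canonical pairing. -/
def pairing (N K : Type*) [Group N] [Group K] : N →* K →*
    Multiplicative (TensorProduct ℤ (Additive (Abelianization N))
          (Additive (Abelianization K))) where
  toFun n :=
    { toFun := fun k => Multiplicative.ofAdd (TensorProduct.tmul ℤ
        (Additive.ofMul (Abelianization.of n)) (Additive.ofMul (Abelianization.of k)))
      map_one' := by simp
      map_mul' := by intros; simp [TensorProduct.tmul_add] }
  map_one' := by ext; simp
  map_mul' := by intros; ext; simp [TensorProduct.add_tmul]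

theorem pairing_closure (N K : Type*) [Group N] [Group K] :
    Subgroup.closure {t | ∃ n k, pairing N K n k = t} = ⊤ := by
  rw [eq_top_iff]
  intro t _
  have : ∀ s : TensorProduct ℤ (Additive (Abelianization N)) (Additive (Abelianization K)),
      Multiplicative.ofAdd s ∈ Subgroup.closure {t | ∃ n k, pairing N K n k = t} := by
    intro s
    induction s using TensorProduct.induction_on with
    | zero => exact one_mem _
    | add x y hx hy => exact mul_mem hx hy
    | tmul x y =>
      apply Subgroup.subset_closure
      obtain ⟨n, hn⟩ : ∃ n, Abelianization.of n = x.toMul := QuotientGroup.mk_surjective x.toMul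
      obtain ⟨k, hk⟩ : ∃ n, Abelianization.of n = y.toMul := QuotientGroup.mk_surjective y.toMul
      refine ⟨n, k, ?_⟩
      change Multiplicative.ofAdd (TensorProduct.tmul ℤ (Additive.ofMul (Abelianization.of n))
        (Additive.ofMul (Abelianization.of k))) = _
      rw [hn, hk]
      rfl
  exact this t.toAdd

instance centerCommGroup (E : Type*) [Group E] : CommGroup (Subgroup.center E) :=
  { (inferInstance : Group (Subgroup.center E)) with
    mul_comm := fun a b => Subtype.ext (Subgroup.mem_center_iff.1 b.2 a.1) }

/-- The commutator pairing for commuting homs into the base of a central extension. -/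
theorem exists_comm_pairing {N K E G : Type*} [Group N] [Group K] [Group E] [Group G]
    (p : E →* G) (hp : p.ker ≤ Subgroup.center E) (hs : Function.Surjective p)
    (i : N →* G) (j : K →* G) (hc : ∀ n k, i n * j k = j k * i n) :
    ∃ γ : N →* K →* Subgroup.center E,
      ∀ n k x y, p x = i n → p y = j k → (γ n k : E) = ⁅y, x⁆ := by
  choose s hs using hs
  have hcen : ∀ n k, ⁅s (j k), s (i n)⁆ ∈ Subgroup.center E := by
    intro n k
    apply hp
    rw [MonoidHom.mem_ker, map_commutatorElement, hs, hs, commutatorElement_eq_one_iff_mul_comm, hc]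
  have h1 : ∀ n k k', ⁅s (j (k * k')), s (i n)⁆ = ⁅s (j k), s (i n)⁆ * ⁅s (j k'), s (i n)⁆ := by
    intro n k k'
    have hz := Subgroup.mem_center_iff.1 (hcen n k')
    have e : ⁅s (j (k * k')), s (i n)⁆ = ⁅s (j k) * s (j k'), s (i n)⁆ :=
      comm_congr p hp (by simp [hs]) rfl
    rw [e]
    calc _ = s (j k) * ⁅s (j k'), s (i n)⁆ * (s (i n) * (s (j k))⁻¹ * (s (i n))⁻¹) := by
            simp only [commutatorElement_def]; group
      _ = ⁅s (j k'), s (i n)⁆ * ⁅s (j k), s (i n)⁆ := by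
            rw [hz]; simp only [commutatorElement_def]; group
      _ = _ := (hz _).symm
  have h2 : ∀ n n' k, ⁅s (j k), s (i (n * n'))⁆ = ⁅s (j k), s (i n)⁆ * ⁅s (j k), s (i n')⁆ := by
    intro n n' k
    have hz := Subgroup.mem_center_iff.1 (hcen n' k)
    have e : ⁅s (j k), s (i (n * n'))⁆ = ⁅s (j k), s (i n) * s (i n')⁆ :=
      comm_congr p hp rfl (by simp [hs])
    rw [e]
    calc _ = (s (j k) * s (i n) * (s (j k))⁻¹) * ⁅s (j k), s (i n')⁆ * (s (i n))⁻¹ := by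
            simp only [commutatorElement_def]; group
      _ = ⁅s (j k), s (i n')⁆ * ⁅s (j k), s (i n)⁆ := by
            rw [hz]; simp only [commutatorElement_def]; group
      _ = _ := (hz _).symm
  refine ⟨MonoidHom.mk' (fun n => MonoidHom.mk' (fun k => ⟨⁅s (j k), s (i n)⁆, hcen n k⟩) ?_) ?_, ?_⟩
  · intro k k'
    exact Subtype.ext (h1 n k k')
  · intro n n'
    ext k
    exact h2 n n' k
  · intro n k x y hx hy
    exact comm_congr p hp (by rw [hs, hy]) (by rw [hs, hx])

theorem card_main {N K G : Type*} [Group N] [Group K] [Group G] (i : N →* G) (j : K →* G)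
    (hc : ∀ n k, i n * j k = j k * i n)
    (hinj : ∀ n k, i n * j k = 1 → n = 1 ∧ k = 1) (hsurj : ∀ g, ∃ n k, i n * j k = g) :
    Nat.card (SchurMultiplier G) =
      Nat.card (SchurMultiplier N) * Nat.card (SchurMultiplier K) *
        Nat.card (TensorProduct ℤ (Additive (Abelianization N))
          (Additive (Abelianization K))) := by
  rw [card_schur, card_schur, card_schur]
  let β : Cov N →* Cov K →* Multiplicative (TensorProduct ℤ (Additive (Abelianization N))
          (Additive (Abelianization K))) :=
    MonoidHom.mk' (fun x => (pairing N K (covMap N x)).comp (covMap K))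
      (by intro a b; ext; simp)
  have hβ : ∀ x y, β x y = pairing N K (covMap N x) (covMap K y) := fun _ _ => rfl
  have sN : Function.Surjective (covMap N) := fun n => ⟨sec n, covMap_sec n⟩
  have sK : Function.Surjective (covMap K) := fun n => ⟨sec n, covMap_sec n⟩
  have sG : Function.Surjective (covMap G) := fun n => ⟨sec n, covMap_sec n⟩
  have hcl : Subgroup.closure {t | ∃ a b, β a b = t} = ⊤ := by
    rw [← pairing_closure N K]
    congr 1
    ext t
    constructor
    · rintro ⟨a, b, rfl⟩
      exact ⟨_, _, rfl⟩
    · rintro ⟨n, k, rfl⟩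
      exact ⟨sec n, sec k, by rw [hβ, covMap_sec, covMap_sec]⟩
  let q : Tw β →* G := MonoidHom.mk' (fun x => i (covMap N x.a) * j (covMap K x.b)) (by
    intro x y
    simp only [mul_a, mul_b, map_mul]
    calc _ = i (covMap N x.a) * (i (covMap N y.a) * j (covMap K x.b)) * j (covMap K y.b) := by group
      _ = _ := by rw [hc]; group)
  have hq_apply : ∀ x, q x = i (covMap N x.a) * j (covMap K x.b) := fun _ => rfl
  have hqk : ∀ x, x ∈ q.ker ↔ covMap N x.a = 1 ∧ covMap K x.b = 1 := by
    intro x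
    rw [MonoidHom.mem_ker, hq_apply]
    constructor
    · exact hinj _ _
    · rintro ⟨h1, h2⟩
      simp [h1, h2]
  have hq : q.ker ≤ Subgroup.center (Tw β) := by
    intro x hx
    obtain ⟨h1, h2⟩ := (hqk x).1 hx
    rw [Subgroup.mem_center_iff]
    intro g
    ext
    · exact Subgroup.mem_center_iff.1 (covMap_ker h1) g.a
    · exact Subgroup.mem_center_iff.1 (covMap_ker h2) g.b
    · simp [hβ, h1, h2, mul_comm]
  have hqs : Function.Surjective q := by
    intro g
    obtain ⟨n, k, rfl⟩ := hsurj g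
    exact ⟨⟨sec n, sec k, 1⟩, by rw [hq_apply]; simp only [covMap_sec]⟩
  obtain ⟨a, ha⟩ := exists_lift (MonoidHom.id G) q hq hqs
  obtain ⟨φ, hφ⟩ := exists_lift i (covMap G) covMap_ker sG
  obtain ⟨ψ, hψ⟩ := exists_lift j (covMap G) covMap_ker sG
  obtain ⟨γ, hγ⟩ := exists_comm_pairing (covMap G) covMap_ker sG i j hc
  obtain ⟨τ, hτ⟩ := exists_tensor_lift γ
  have hτβ : ∀ x y, (τ (β x y) : Cov G) = ⁅ψ y, φ x⁆ := by
    intro x y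
    rw [← hγ _ _ _ _ (hφ x) (hψ y), ← hτ]
    rfl
  have hτc : ∀ t g, g * (τ t : Cov G) = τ t * g := fun t => Subgroup.mem_center_iff.1 (τ t).2
  have hτk : ∀ t, covMap G (τ t) = 1 := by
    intro t
    have : (⊤ : Subgroup _) ≤ (((covMap G).comp (Subgroup.center (Cov G)).subtype).comp τ).ker := by
      rw [← hcl, Subgroup.closure_le]
      rintro _ ⟨x, y, rfl⟩
      change covMap G (τ (β x y) : Cov G) = 1
      rw [hτβ, map_commutatorElement, hφ, hψ, commutatorElement_eq_one_iff_mul_comm, hc]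
    exact this (Subgroup.mem_top t)
  let b : Tw β →* Cov G := MonoidHom.mk' (fun x => φ x.a * ψ x.b * τ x.t) (by
    intro x y
    simp only [mul_a, mul_b, mul_t, map_mul, Subgroup.coe_mul, hτβ]
    have e := hτc (β y.a x.b)
    rw [hτβ] at e
    calc _ = φ x.a * φ y.a * (ψ x.b * ψ y.b * (τ x.t * τ y.t) * ⁅ψ x.b, φ y.a⁆) := by group
      _ = φ x.a * (φ y.a * ⁅ψ x.b, φ y.a⁆) * (ψ x.b * ψ y.b * (τ x.t * τ y.t)) := by
          rw [e]; group
      _ = φ x.a * ψ x.b * φ y.a * (ψ y.b * τ x.t) * τ y.t := by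
          rw [e]
          simp only [commutatorElement_def]
          group
      _ = φ x.a * ψ x.b * (φ y.a * τ x.t) * ψ y.b * τ y.t := by rw [hτc x.t (ψ y.b)]; group
      _ = _ := by rw [hτc x.t (φ y.a)]; group)
  have hb : ∀ x, covMap G (b x) = q x := by
    intro x
    change covMap G (φ x.a * ψ x.b * τ x.t) = _
    rw [map_mul, map_mul, hτk, hφ, hψ, mul_one, hq_apply]
  rw [card_mult_eq (covMap G) q covMap_ker hq a b ha hb, ← Nat.card_prod, ← Nat.card_prod]
  have hm : ∀ x, x ∈ mult q ↔ x.a ∈ mult (covMap N) ∧ x.b ∈ mult (covMap K) := by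
    intro x
    rw [Subgroup.mem_inf, hqk, mem_commutator_iff β hcl, Subgroup.mem_inf, Subgroup.mem_inf,
      MonoidHom.mem_ker, MonoidHom.mem_ker]
    tauto
  exact Nat.card_congr
    { toFun := fun x => ((⟨x.1.a, ((hm x.1).1 x.2).1⟩, ⟨x.1.b, ((hm x.1).1 x.2).2⟩), x.1.t.toAdd)
      invFun := fun y => ⟨⟨y.1.1.1, y.1.2.1, Multiplicative.ofAdd y.2⟩,
        (hm _).2 ⟨y.1.1.2, y.1.2.2⟩⟩
      left_inv := fun _ => rfl
      right_inv := fun _ => rfl }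

end SchurAux

theorem card_schur_multiplier_internal_direct_product (G : Type*) [Group G] [Finite G]
    (N K : Subgroup G) [N.Normal] [K.Normal] (hinf : N ⊓ K = ⊥) (hsup : N ⊔ K = ⊤) :
    Nat.card (SchurMultiplier G) =
      Nat.card (SchurMultiplier N) * Nat.card (SchurMultiplier K) *
        Nat.card (TensorProduct ℤ (Additive (Abelianization N))
          (Additive (Abelianization K))) := by
  refine SchurAux.card_main N.subtype K.subtype ?_ ?_ ?_
  · intro n k
    exact Subgroup.commute_of_normal_of_disjoint N K ‹_› ‹_› (disjoint_iff.2 hinf) n k n.2 k.2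
  · intro n k h
    have h' : (n : G) * k = 1 := h
    have hn : (n : G) = (k : G)⁻¹ := eq_inv_of_mul_eq_one_left h'
    have : (n : G) ∈ N ⊓ K := ⟨n.2, hn ▸ K.inv_mem k.2⟩
    rw [hinf, Subgroup.mem_bot] at this
    refine ⟨Subtype.ext this, Subtype.ext ?_⟩
    rw [this, one_mul] at h'
    exact h'
  · intro g
    have hg : g ∈ N ⊔ K := hsup ▸ Subgroup.mem_top g
    obtain ⟨n, hn, k, hk, rfl⟩ := Subgroup.mem_sup_of_normal_left.1 hg
    exact ⟨⟨n, hn⟩, ⟨k, hk⟩, rfl⟩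
end

section
/- Let p be a prime and G an abelian group of order pⁿ whose Schur multiplier has order p^{n(n−1)/2 − 4}. Then G is isomorphic to ℤ/p² × ℤ/p² or to ℤ/p² × (ℤ/p)³. -/
namespace SM

open scoped commutatorElement

lemma card_closure_le {A P : Type*} [CommGroup A] [Fintype P] (g : P → A) (m : P → ℕ)
    (hm : ∀ p, 0 < m p) (hg : ∀ p, g p ^ m p = 1) :
    Finite (Subgroup.closure (Set.range g)) ∧
      Nat.card (Subgroup.closure (Set.range g)) ≤ ∏ p, m p := by
  classical
  have hfo : ∀ p, IsOfFinOrder (g p) := fun p => isOfFinOrder_iff_pow_eq_one.2 ⟨m p, hm p, hg p⟩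
  have hfin : ∀ p, Finite (Subgroup.zpowers (g p)) := fun p => (hfo p).finite_zpowers
  let f : (∀ p, Subgroup.zpowers (g p)) →* A :=
    { toFun := fun x => ∏ p, (x p : A)
      map_one' := by simp
      map_mul' := fun x y => by simp [Finset.prod_mul_distrib] }
  have hle : Subgroup.closure (Set.range g) ≤ f.range := by
    rw [Subgroup.closure_le]
    rintro _ ⟨p, rfl⟩
    refine ⟨Pi.mulSingle p ⟨g p, Subgroup.mem_zpowers _⟩, ?_⟩
    change ∏ q, ((Pi.mulSingle p (⟨g p, Subgroup.mem_zpowers _⟩ : Subgroup.zpowers (g p)) : ∀ p, Subgroup.zpowers (g p)) q : A) = g p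
    rw [Finset.prod_eq_single p]
    · simp
    · intro b _ hb
      rw [Pi.mulSingle_eq_of_ne hb]; rfl
    · simp
  have hfr : Finite f.range := Set.finite_range f
  refine ⟨Set.Finite.subset (s := (f.range : Set A)) (Set.finite_range f) hle, ?_⟩
  calc Nat.card (Subgroup.closure (Set.range g)) ≤ Nat.card f.range :=
        Nat.card_mono (s := (Subgroup.closure (Set.range g) : Set A)) (t := (f.range : Set A)) (Set.finite_range f) hle
    _ ≤ Nat.card (∀ p, Subgroup.zpowers (g p)) :=
        Nat.card_le_card_of_surjective _ f.rangeRestrict_surjective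
    _ = ∏ p, orderOf (g p) := by simp [Nat.card_pi, Nat.card_zpowers]
    _ ≤ ∏ p, m p := Finset.prod_le_prod' fun p _ => orderOf_le_of_pow_eq_one (hm p) (hg p)

lemma comm_mem_center {Q H : Type*} [Group Q] [CommGroup H] (π : Q →* H)
    (hπ : π.ker ≤ Subgroup.center Q) (x y : Q) : ⁅x, y⁆ ∈ Subgroup.center Q := by
  apply hπ
  rw [MonoidHom.mem_ker, map_commutatorElement, commutatorElement_eq_one_iff_mul_comm, mul_comm]

/-- commutator as a homomorphism in the second variable -/
def comHom {Q : Type*} [Group Q] (hc : ∀ x y : Q, ⁅x, y⁆ ∈ Subgroup.center Q) (x : Q) :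
    Q →* Subgroup.center Q where
  toFun y := ⟨⁅x, y⁆, hc x y⟩
  map_one' := by ext; simp
  map_mul' y z := by
    ext
    have h := Subgroup.mem_center_iff.1 (hc x z) y
    simp only [Subgroup.coe_mul]
    have : ⁅x, y * z⁆ = ⁅x, y⁆ * (y * ⁅x, z⁆ * y⁻¹) := by simp only [commutatorElement_def]; group
    rw [this, h]; group

lemma upper {Q ι : Type*} [Group Q] [Fintype ι] [LinearOrder ι] (m : ι → ℕ) (hm : ∀ i, 0 < m i)
    (π : Q →* (∀ i, Multiplicative (ZMod (m i)))) (hs : Function.Surjective π)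
    (hπ : π.ker ≤ Subgroup.center Q) :
    Nat.card (commutator Q) ≤ ∏ q : {q : ι × ι // q.1 < q.2}, Nat.gcd (m q.1.1) (m q.1.2) := by
  have hc := comm_mem_center π hπ
  let b : ι → ∀ i, Multiplicative (ZMod (m i)) := fun i => Pi.mulSingle i (Multiplicative.ofAdd 1)
  choose t ht using fun i => hs (b i)
  have htp : ∀ i, t i ^ m i ∈ Subgroup.center Q := by
    intro i
    apply hπ
    rw [MonoidHom.mem_ker, map_pow, ht]
    simp only [b]
    rw [← Pi.mulSingle_pow, ← ofAdd_nsmul]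
    simp
  have hcen : ∀ x y : Q, y ∈ Subgroup.center Q → comHom hc x y = 1 := by
    intro x y hy
    ext
    change ⁅x, y⁆ = 1
    rw [commutatorElement_eq_one_iff_mul_comm]
    exact Subgroup.mem_center_iff.1 hy x
  have hinv : ∀ x y : Q, comHom hc x y = (comHom hc y x)⁻¹ := by
    intro x y
    ext
    exact (commutatorElement_inv y x).symm
  let g : {q : ι × ι // q.1 < q.2} → Subgroup.center Q := fun q => comHom hc (t q.1.1) (t q.1.2)
  have hg : ∀ q, g q ^ (Nat.gcd (m q.1.1) (m q.1.2)) = 1 := by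
    intro q
    refine pow_gcd_eq_one.2 ⟨?_, ?_⟩
    · simp only [g]
      rw [hinv, inv_pow, ← map_pow, hcen _ _ (htp _), inv_one]
    · simp only [g]
      rw [← map_pow, hcen _ _ (htp _)]
  let _ : CommGroup (Subgroup.center Q) :=
    { (inferInstance : Group (Subgroup.center Q)) with
      mul_comm := fun a b => Subtype.ext (b.2.comm a).symm }
  obtain ⟨hfin, hcard⟩ := card_closure_le g (fun q => Nat.gcd (m q.1.1) (m q.1.2))
    (fun q => Nat.gcd_pos_of_pos_left _ (hm _)) hg
  set D := Subgroup.closure (Set.range g) with hD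
  have htt : ∀ i j, comHom hc (t i) (t j) ∈ D := by
    intro i j
    rcases lt_trichotomy i j with h | h | h
    · exact Subgroup.subset_closure ⟨⟨(i, j), h⟩, rfl⟩
    · subst h
      have : comHom hc (t i) (t i) = 1 := by ext; exact commutatorElement_self _
      rw [this]; exact one_mem _
    · rw [hinv]
      exact inv_mem (Subgroup.subset_closure ⟨⟨(j, i), h⟩, rfl⟩)
  have hgen : ∀ S : Subgroup Q, (∀ i, t i ∈ S) → Subgroup.center Q ≤ S → S = ⊤ := by
    intro S h1 h2
    rw [eq_top_iff]
    intro x _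
    have : ∃ y ∈ S, π y = π x := by
      have : π x ∈ S.map π := by
        rw [← Finset.univ_prod_mulSingle (π x)]
        refine Subgroup.prod_mem _ fun i _ => ?_
        have : Pi.mulSingle i (π x i) = (π (t i)) ^ ((Multiplicative.toAdd (π x i)).cast : ℤ) := by
          rw [ht]
          simp only [b]
          rw [← Pi.mulSingle_zpow, ← ofAdd_zsmul]
          simp
        rw [this]
        exact zpow_mem (Subgroup.mem_map_of_mem _ (h1 i)) _
      exact this
    obtain ⟨y, hy, hyx⟩ := this
    have : y⁻¹ * x ∈ S := h2 (hπ (by rw [MonoidHom.mem_ker, map_mul, map_inv, hyx, inv_mul_cancel]))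
    simpa using mul_mem hy this
  have h1 : ∀ i y, comHom hc (t i) y ∈ D := by
    intro i y
    have := hgen (D.comap (comHom hc (t i))) (fun j => htt i j) (fun z hz => by
      rw [Subgroup.mem_comap, hcen _ _ hz]; exact one_mem _)
    have h : y ∈ (D.comap (comHom hc (t i))) := this ▸ Subgroup.mem_top _
    exact h
  have h2 : ∀ x y, comHom hc x y ∈ D := by
    intro x y
    have := hgen (D.comap (comHom hc x)) (fun j => by
      rw [Subgroup.mem_comap, hinv]; exact inv_mem (h1 j x)) (fun z hz => by
      rw [Subgroup.mem_comap, hcen _ _ hz]; exact one_mem _)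
    have h : y ∈ (D.comap (comHom hc x)) := this ▸ Subgroup.mem_top _
    exact h
  have hle : commutator Q ≤ D.map (Subgroup.center Q).subtype := by
    rw [commutator_def, Subgroup.commutator_le]
    intro x _ y _
    exact ⟨comHom hc x y, h2 x y, rfl⟩
  have hfm : (D.map (Subgroup.center Q).subtype : Set Q).Finite := by
    rw [Subgroup.coe_map]
    exact Set.Finite.image _ hfin
  calc Nat.card (commutator Q) ≤ Nat.card (D.map (Subgroup.center Q).subtype) :=
        Nat.card_mono hfm hle
    _ = Nat.card D := Nat.card_congr (D.equivMapOfInjective _ (Subgroup.subtype_injective _)).symm.toEquiv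
    _ ≤ _ := hcard

/-- Central extension of `A` by `B` from a biadditive cocycle -/
structure Ext {A B : Type*} [AddCommGroup A] [AddCommGroup B] (f : A →+ A →+ B) where
  a : A
  b : B

namespace Ext
variable {A B : Type*} [AddCommGroup A] [AddCommGroup B] (f : A →+ A →+ B)

@[ext] lemma ext' {x y : Ext f} (h : x.a = y.a) (h' : x.b = y.b) : x = y := by
  cases x; cases y; simp_all

instance : Mul (Ext f) := ⟨fun x y => ⟨x.a + y.a, x.b + y.b + f x.a y.a⟩⟩
instance : One (Ext f) := ⟨⟨0, 0⟩⟩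
instance : Inv (Ext f) := ⟨fun x => ⟨-x.a, -x.b + f x.a x.a⟩⟩
@[simp] lemma mul_a (x y : Ext f) : (x * y).a = x.a + y.a := rfl
@[simp] lemma mul_b (x y : Ext f) : (x * y).b = x.b + y.b + f x.a y.a := rfl
@[simp] lemma one_a : (1 : Ext f).a = 0 := rfl
@[simp] lemma one_b : (1 : Ext f).b = 0 := rfl
@[simp] lemma inv_a (x : Ext f) : (x⁻¹).a = -x.a := rfl
@[simp] lemma inv_b (x : Ext f) : (x⁻¹).b = -x.b + f x.a x.a := rfl

instance : Group (Ext f) :=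
  Group.ofLeftAxioms
    (fun x y z => by
      ext
      · simp [add_assoc]
      · simp; abel)
    (fun x => by ext <;> simp)
    (fun x => by ext <;> simp)

lemma comm_eq (x y : Ext f) : ⁅x, y⁆ = ⟨0, f x.a y.a - f y.a x.a⟩ := by
  have : x * y = (⟨0, f x.a y.a - f y.a x.a⟩ : Ext f) * (y * x) := by
    ext
    · simp [add_comm]
    · simp; abel
  rw [commutatorElement_def, this]; group

def proj : Ext f →* Multiplicative A where
  toFun x := Multiplicative.ofAdd x.a
  map_one' := rfl
  map_mul' _ _ := rfl

def inB : Multiplicative B →* Ext f where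
  toFun x := ⟨0, x.toAdd⟩
  map_one' := rfl
  map_mul' x y := by ext <;> simp

end Ext

lemma card_eq {G : Type*} [CommGroup G] : Nat.card (SchurMultiplier G) =
    (⁅(⊤ : Subgroup (FreeGroup G)), (presentation G).ker⁆).relIndex (commutator (FreeGroup G)) := by
  have h : (presentation G).ker ⊓ commutator (FreeGroup G) = commutator (FreeGroup G) := by
    rw [inf_eq_right]
    exact Abelianization.commutator_subset_ker _
  rw [← h]
  rfl

lemma card_le {G ι : Type*} [CommGroup G] [Fintype ι] [LinearOrder ι] (m : ι → ℕ)
    (hm : ∀ i, 0 < m i) (φ : G ≃* (∀ i, Multiplicative (ZMod (m i)))) :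
    Nat.card (SchurMultiplier G) ≤
      ∏ q : {q : ι × ι // q.1 < q.2}, Nat.gcd (m q.1.1) (m q.1.2) := by
  rw [card_eq]
  set R := (presentation G).ker with hR
  set N := ⁅(⊤ : Subgroup (FreeGroup G)), R⁆ with hN
  have hNR : N ≤ R := Subgroup.commutator_le_right _ _
  have h1 : N.relIndex (commutator (FreeGroup G)) = Nat.card (commutator (FreeGroup G ⧸ N)) := by
    have := Subgroup.relIndex_ker (commutator (FreeGroup G)) (QuotientGroup.mk' N)
    rw [QuotientGroup.ker_mk'] at this
    rw [this, commutator_def, Subgroup.map_commutator, commutator_def,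
      ← MonoidHom.range_eq_map, MonoidHom.range_eq_top.2 (QuotientGroup.mk'_surjective N)]
  rw [h1]
  let π : FreeGroup G ⧸ N →* (∀ i, Multiplicative (ZMod (m i))) :=
    φ.toMonoidHom.comp (QuotientGroup.lift N (presentation G) hNR)
  refine upper m hm π ?_ ?_
  · intro y
    refine ⟨(FreeGroup.of (φ.symm y) : FreeGroup G), ?_⟩
    simp [π, presentation]
  · intro x hx
    obtain ⟨x, rfl⟩ := QuotientGroup.mk_surjective x
    have hxR : x ∈ R := by
      rw [MonoidHom.mem_ker] at hx
      rw [hR, MonoidHom.mem_ker]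
      simpa [π] using hx
    rw [Subgroup.mem_center_iff]
    intro y
    obtain ⟨y, rfl⟩ := QuotientGroup.mk_surjective y
    rw [← commutatorElement_eq_one_iff_mul_comm]
    change ((⁅y, x⁆ : FreeGroup G) : FreeGroup G ⧸ N) = 1
    rw [QuotientGroup.eq_one_iff]
    exact Subgroup.commutator_mem_commutator (Subgroup.mem_top _) hxR

lemma le_card {G ι : Type*} [CommGroup G] [Fintype ι] [LinearOrder ι] (m : ι → ℕ)
    (hm : ∀ i, 0 < m i) (φ : G ≃* (∀ i, Multiplicative (ZMod (m i))))
    (h0 : Nat.card (SchurMultiplier G) ≠ 0) :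
    ∏ q : {q : ι × ι // q.1 < q.2}, Nat.gcd (m q.1.1) (m q.1.2) ≤
    Nat.card (SchurMultiplier G) := by
  let B := ∀ q : {q : ι × ι // q.1 < q.2}, ZMod (Nat.gcd (m q.1.1) (m q.1.2))
  let A := ∀ i, ZMod (m i)
  let c1 : ∀ q : {q : ι × ι // q.1 < q.2}, ZMod (m q.1.1) →+* ZMod (Nat.gcd (m q.1.1) (m q.1.2)) :=
    fun q => ZMod.castHom (Nat.gcd_dvd_left _ _) _
  let c2 : ∀ q : {q : ι × ι // q.1 < q.2}, ZMod (m q.1.2) →+* ZMod (Nat.gcd (m q.1.1) (m q.1.2)) :=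
    fun q => ZMod.castHom (Nat.gcd_dvd_right _ _) _
  let f : A →+ A →+ B := AddMonoidHom.mk' (fun x => AddMonoidHom.mk' (fun y q => c1 q (x q.1.1) * c2 q (y q.1.2))
      (fun y z => by funext q; exact (congrArg _ (map_add (c2 q) _ _)).trans (mul_add _ _ _)))
      (fun y z => by refine AddMonoidHom.ext fun w => ?_; funext q; exact (congrArg (· * _) (map_add (c1 q) _ _)).trans (add_mul _ _ _))
  let ψ : FreeGroup G →* Ext f := FreeGroup.lift fun g => ⟨fun i => Multiplicative.toAdd (φ g i), 0⟩
  have hψ : ∀ x, (ψ x).a = fun i => Multiplicative.toAdd (φ (presentation G x) i) := by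
    let φ' : G →* Multiplicative A :=
      { toFun := fun g => Multiplicative.ofAdd (fun i => Multiplicative.toAdd (φ g i))
        map_one' := by simp; rfl
        map_mul' := fun x y => by simp; rfl }
    have : (Ext.proj f).comp ψ = φ'.comp (presentation G) := by
      ext g
      simp [ψ, φ', presentation, Ext.proj]
    intro x
    exact DFunLike.congr_fun this x
  rw [card_eq] at h0 ⊢
  set R := (presentation G).ker with hR
  set N := ⁅(⊤ : Subgroup (FreeGroup G)), R⁆ with hN
  have hNk : N ≤ ψ.ker := by
    rw [hN, Subgroup.commutator_le]
    intro x _ y hy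
    have hy' : (ψ y).a = 0 := by
      rw [hψ, MonoidHom.mem_ker.1 hy]; simp; rfl
    rw [MonoidHom.mem_ker, map_commutatorElement, Ext.comm_eq, hy']
    simp; rfl
  have hdvd := Subgroup.relIndex_dvd_of_le_left (commutator (FreeGroup G)) hNk
  refine le_trans ?_ (Nat.le_of_dvd (Nat.pos_of_ne_zero h0) hdvd)
  have h0' : ψ.ker.relIndex (commutator (FreeGroup G)) ≠ 0 := fun h => h0 (by
    rw [h] at hdvd; exact zero_dvd_iff.1 hdvd)
  rw [Subgroup.relIndex_ker] at h0' ⊢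
  have : Finite ((commutator (FreeGroup G)).map ψ) := Nat.finite_of_card_ne_zero h0'
  have hgcd : ∀ q : {q : ι × ι // q.1 < q.2}, NeZero (Nat.gcd (m q.1.1) (m q.1.2)) := fun q =>
    ⟨(Nat.gcd_pos_of_pos_left _ (hm _)).ne'⟩
  have hB : ∏ q : {q : ι × ι // q.1 < q.2}, Nat.gcd (m q.1.1) (m q.1.2) = Nat.card B := by
    simp [B]
  have key : ∀ b : B, Ext.inB f (Multiplicative.ofAdd b) ∈ (commutator (FreeGroup G)).map ψ := by
    intro b
    let S := ((commutator (FreeGroup G)).map ψ).comap (Ext.inB f)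
    have hS : ∀ q, Multiplicative.ofAdd (Pi.single q 1 : B) ∈ S := by
      intro q
      let u : ι → FreeGroup G := fun i => FreeGroup.of (φ.symm (Pi.mulSingle i (Multiplicative.ofAdd 1)))
      have hu : ∀ i, (ψ (u i)).a = Pi.single i 1 := by
        intro i
        rw [hψ]
        simp [u, presentation]
        rfl
      refine ⟨⁅u q.1.1, u q.1.2⁆, Subgroup.commutator_mem_commutator (Subgroup.mem_top _) (Subgroup.mem_top _), ?_⟩
      rw [map_commutatorElement, Ext.comm_eq, hu, hu]
      ext1
      · rfl
      change f _ _ - f _ _ = Pi.single q 1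
      funext r
      change c1 r ((Pi.single q.1.1 1 : A) r.1.1) * c2 r ((Pi.single q.1.2 1 : A) r.1.2) -
        c1 r ((Pi.single q.1.2 1 : A) r.1.1) * c2 r ((Pi.single q.1.1 1 : A) r.1.2) = _
      have hz : c1 r ((Pi.single q.1.2 1 : A) r.1.1) * c2 r ((Pi.single q.1.1 1 : A) r.1.2) = 0 := by
        by_cases h1 : r.1.1 = q.1.2
        · have h2 : r.1.2 ≠ q.1.1 := by
            intro h2
            have := r.2
            rw [h1, h2] at this
            exact lt_asymm this q.2
          rw [Pi.single_eq_of_ne h2, map_zero, mul_zero]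
        · rw [Pi.single_eq_of_ne h1, map_zero, zero_mul]
      rw [hz, sub_zero]
      by_cases hrq : r = q
      · subst hrq
        rw [Pi.single_eq_same, Pi.single_eq_same, map_one, map_one, mul_one, Pi.single_eq_same]
      · rw [Pi.single_eq_of_ne hrq]
        by_cases h1 : r.1.1 = q.1.1
        · have h2 : r.1.2 ≠ q.1.2 := fun h2 => hrq (Subtype.ext (Prod.ext h1 h2))
          rw [Pi.single_eq_of_ne h2, map_zero, mul_zero]
        · rw [Pi.single_eq_of_ne h1, map_zero, zero_mul]
    have : Multiplicative.ofAdd b ∈ S := by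
      have hb : Multiplicative.ofAdd b = ∏ q, (Multiplicative.ofAdd (Pi.single q 1 : B)) ^ (b q).val := by
        have h1 : b = ∑ q, (b q).val • (Pi.single q 1 : B) := by
          refine (Finset.univ_sum_single b).symm.trans (Finset.sum_congr rfl fun q _ => ?_)
          rw [← Pi.single_smul, nsmul_one, ZMod.natCast_zmod_val]
        have h2 := congrArg Multiplicative.ofAdd h1
        rw [ofAdd_sum] at h2
        exact h2
      rw [hb]
      exact Subgroup.prod_mem _ fun q _ => pow_mem (hS q) _
    exact this
  rw [hB]
  refine Nat.card_le_card_of_injective (fun b : B => (⟨_, key b⟩ : (commutator (FreeGroup G)).map ψ)) ?_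
  intro b b' h
  exact congrArg (fun x => x.1.b) h

lemma sum_pairs {ι : Type*} [Fintype ι] [LinearOrder ι] (F : ι → ι → ℕ) (hF : ∀ i j, F i j = F j i) :
    ∑ i, ∑ j, F i j = 2 * (∑ q : {q : ι × ι // q.1 < q.2}, F q.1.1 q.1.2) + ∑ i, F i i := by
  have h1 : ∑ q : {q : ι × ι // q.1 < q.2}, F q.1.1 q.1.2 = ∑ i, ∑ j, if i < j then F i j else 0 := by
    rw [← Finset.sum_product', Finset.univ_product_univ, ← Finset.sum_filter]
    exact (Finset.sum_subtype _ (by simp) (fun q : ι × ι => F q.1 q.2)).symm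
  have h2 : ∑ i, ∑ j, (if i < j then F i j else 0) = ∑ i, ∑ j, if j < i then F i j else 0 := by
    rw [Finset.sum_comm]
    refine Finset.sum_congr rfl fun i _ => Finset.sum_congr rfl fun j _ => ?_
    rw [hF]
  have h3 : ∑ i, F i i = ∑ i, ∑ j, if i = j then F i j else 0 := by
    simp
  rw [h1, two_mul]
  nth_rw 2 [h2]
  rw [h3, ← Finset.sum_add_distrib, ← Finset.sum_add_distrib]
  refine Finset.sum_congr rfl fun i _ => ?_
  rw [← Finset.sum_add_distrib, ← Finset.sum_add_distrib]
  refine Finset.sum_congr rfl fun j _ => ?_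
  rcases lt_trichotomy i j with h | h | h
  · simp [h, h.not_gt, h.ne]
  · simp [h]
  · simp [h, h.not_gt, h.ne']

lemma d_ge_two {a b : ℕ} (ha : 2 ≤ a) (hb : 2 ≤ b) : 2 ≤ a * b - min a b := by
  have : min a b ≤ a := min_le_left _ _
  have : a * 2 ≤ a * b := Nat.mul_le_mul_left a hb
  omega

lemma d_ge_one {a b : ℕ} (ha : 2 ≤ a) (hb : 1 ≤ b) : 1 ≤ a * b - min a b := by
  have : min a b ≤ b := min_le_right _ _
  have : 2 * b ≤ a * b := Nat.mul_le_mul_right b ha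
  omega

lemma combi {ι : Type*} [Fintype ι] [DecidableEq ι] (e : ι → ℕ) (he : ∀ i, 1 ≤ e i)
    (h8 : ∑ i, ∑ j, (e i * e j - min (e i) (e j)) = 8) :
    (Fintype.card ι = 2 ∧ ∀ i, e i = 2) ∨
    (∃ i0, e i0 = 2 ∧ (∀ j, j ≠ i0 → e j = 1) ∧ Fintype.card ι = 4) := by
  by_cases hA : ∀ i, e i = 1
  · simp [hA] at h8
  push Not at hA
  obtain ⟨i, hi⟩ := hA
  have hi2 : 2 ≤ e i := by have := he i; omega
  by_cases hB : ∀ j, j ≠ i → e j = 1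
  · right
    have hrow : ∀ k, k ≠ i → ∑ j, (e k * e j - min (e k) (e j)) = e i - 1 := by
      intro k hk
      rw [Finset.sum_eq_single i]
      · rw [hB k hk, min_eq_left (he i)]; omega
      · intro j _ hj
        rw [hB k hk, hB j hj]; rfl
      · simp
    have hrow0 : ∑ j, (e i * e j - min (e i) (e j)) = (e i * e i - e i) + (Fintype.card ι - 1) * (e i - 1) := by
      rw [← Finset.add_sum_erase _ _ (Finset.mem_univ i), min_self]
      congr 1
      rw [Finset.sum_congr rfl (g := fun _ => e i - 1)]
      · simp
      · intro j hj
        rw [hB j (Finset.ne_of_mem_erase hj), min_eq_right (he i), mul_one]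
    have htot : (e i * e i - e i) + (Fintype.card ι - 1) * (e i - 1)
        + (Fintype.card ι - 1) * (e i - 1) = 8 := by
      rw [← h8, ← Finset.add_sum_erase _ _ (Finset.mem_univ i), hrow0]
      congr 1
      rw [Finset.sum_congr rfl (g := fun _ => e i - 1)]
      · simp
      · intro j hj
        exact hrow j (Finset.ne_of_mem_erase hj)
    refine ⟨i, ?_⟩
    have h3 : e i ≤ 3 := by
      by_contra h
      have : e i * 4 ≤ e i * e i := Nat.mul_le_mul_left _ (by omega)
      omega
    have : e i = 2 ∨ e i = 3 := by omega
    rcases this with h | h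
    · refine ⟨h, hB, ?_⟩
      rw [h] at htot
      omega
    · rw [h] at htot
      omega
  · left
    push Not at hB
    obtain ⟨j, hji, hj⟩ := hB
    have hj2 : 2 ≤ e j := by have := he j; omega
    have hle : ∀ s : Finset ι, ∑ i ∈ s, ∑ j ∈ s, (e i * e j - min (e i) (e j)) ≤ 8 := by
      intro s
      rw [← h8]
      exact (Finset.sum_le_sum fun k _ => Finset.sum_le_univ_sum_of_nonneg (fun _ => Nat.zero_le _)).trans
        (Finset.sum_le_univ_sum_of_nonneg (fun _ => Nat.zero_le _))
    have hii := d_ge_two hi2 hi2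
    have hjj := d_ge_two hj2 hj2
    have hij := d_ge_two hi2 hj2
    have hji' := d_ge_two hj2 hi2
    have huniv : ∀ l, l = i ∨ l = j := by
      intro l
      by_contra! hl
      have := hle {i, j, l}
      have hil := d_ge_one hi2 (he l)
      have hjl := d_ge_one hj2 (he l)
      simp only [Finset.sum_insert, Finset.mem_insert, Finset.mem_singleton, hji.symm, hl.1.symm, hl.2.symm,
        or_self, not_false_eq_true, Finset.sum_singleton] at this
      omega
    have hu : (Finset.univ : Finset ι) = {i, j} := by
      ext l; simpa using huniv l
    refine ⟨by rw [← Finset.card_univ, hu, Finset.card_pair hji.symm], ?_⟩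
    have hs := hle {i, j}
    rw [Finset.sum_pair hji.symm, Finset.sum_pair hji.symm, Finset.sum_pair hji.symm] at hs
    have key : ∀ a : ℕ, 2 ≤ a → a * a - min a a ≤ 2 → a = 2 := by
      intro a ha h
      by_contra h'
      have : 3 * a ≤ a * a := Nat.mul_le_mul_right _ (by omega)
      rw [min_self] at h
      omega
    intro l
    rcases huniv l with rfl | rfl
    · exact key _ hi2 (by omega)
    · exact key _ hj2 (by omega)

/-- transport along equality of moduli -/
def zcongr {a b : ℕ} (h : a = b) : Multiplicative (ZMod a) ≃* Multiplicative (ZMod b) :=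
  h ▸ MulEquiv.refl _

/-- reindexing a product -/
def reindex {ι κ : Type*} (M : ι → Type*) [∀ i, Mul (M i)] (σ : κ ≃ ι) :
    (∀ i, M i) ≃* (∀ k, M (σ k)) :=
  { (Equiv.piCongrLeft M σ).symm with
    map_mul' := fun _ _ => rfl }

/-- split off the first factor -/
def splitFirst {k : ℕ} (M : Fin (k + 1) → Type*) [∀ i, Mul (M i)] :
    (∀ i, M i) ≃* M 0 × (∀ i : Fin k, M i.succ) :=
  { toFun := fun f => (f 0, fun i => f i.succ)
    invFun := fun x => Fin.cons x.1 x.2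
    left_inv := fun f => by
      funext i
      refine Fin.cases ?_ (fun _ => ?_) i <;> rfl
    right_inv := fun x => rfl
    map_mul' := fun _ _ => rfl }

end SM

theorem abelian_classification_t_four (p n : ℕ) (hp : p.Prime)
    (G : Type*) [CommGroup G] [Finite G] (hG : Nat.card G = p ^ n)
    (hM : Nat.card (SchurMultiplier G) * p ^ 4 = p ^ (n * (n - 1) / 2)) :
    Nonempty (G ≃* Multiplicative (ZMod (p ^ 2)) × Multiplicative (ZMod (p ^ 2))) ∨
      Nonempty (G ≃* Multiplicative (ZMod (p ^ 2)) × (Fin 3 → Multiplicative (ZMod p))) := by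
  classical
  obtain ⟨ι, _, m, hm, ⟨φ⟩⟩ := CommGroup.equiv_prod_multiplicative_zmod_of_finite G
  let _ : LinearOrder ι := LinearOrder.lift' (Fintype.equivFin ι) (Fintype.equivFin ι).injective
  have hm0 : ∀ i, 0 < m i := fun i => (hm i).trans' one_pos
  have hcardG : ∏ i, m i = p ^ n := by
    rw [← hG, Nat.card_congr φ.toEquiv, Nat.card_pi]
    exact Finset.prod_congr rfl fun i _ => (Nat.card_zmod (m i)).symm
  have hex : ∀ i, ∃ e, m i = p ^ e := fun i => by
    obtain ⟨e, -, he⟩ := (Nat.dvd_prime_pow hp).1 (hcardG ▸ Finset.dvd_prod_of_mem m (Finset.mem_univ i))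
    exact ⟨e, he⟩
  choose e he using hex
  obtain rfl : m = fun i => p ^ e i := funext he
  have he1 : ∀ i, 1 ≤ e i := by
    intro i
    by_contra h
    have h0 : e i = 0 := by omega
    have := hm i
    simp [h0] at this
  have hn : ∑ i, e i = n := by
    rw [Finset.prod_pow_eq_pow_sum] at hcardG
    exact Nat.pow_right_injective hp.two_le hcardG
  have h0 : Nat.card (SchurMultiplier G) ≠ 0 := by
    intro h
    rw [h, zero_mul] at hM
    exact (pow_pos hp.pos _).ne hM
  have hc := le_antisymm (SM.card_le _ hm0 φ) (SM.le_card _ hm0 φ h0)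
  have hgcd : ∀ a b : ℕ, Nat.gcd (p ^ a) (p ^ b) = p ^ min a b := by
    intro a b
    rcases le_total a b with h | h
    · rw [min_eq_left h, Nat.gcd_eq_left (pow_dvd_pow p h)]
    · rw [min_eq_right h, Nat.gcd_eq_right (pow_dvd_pow p h)]
  simp only [hgcd] at hc
  rw [Finset.prod_pow_eq_pow_sum] at hc
  rw [hc, ← pow_add] at hM
  have hM' := Nat.pow_right_injective hp.two_le hM
  have hpairs := SM.sum_pairs (fun i j => min (e i) (e j)) (fun i j => min_comm _ _)
  simp only [min_self, hn] at hpairs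
  have hsq : ∑ i, ∑ j, e i * e j = n * n := by
    rw [← Finset.sum_mul_sum, hn]
  have hsplit : ∑ i, ∑ j, (e i * e j - min (e i) (e j)) + ∑ i, ∑ j, min (e i) (e j) = n * n := by
    rw [← hsq, ← Finset.sum_add_distrib]
    refine Finset.sum_congr rfl fun i _ => ?_
    rw [← Finset.sum_add_distrib]
    refine Finset.sum_congr rfl fun j _ => Nat.sub_add_cancel ?_
    exact (min_le_left _ _).trans (Nat.le_mul_of_pos_right _ (he1 j))
  have heven : 2 * (n * (n - 1) / 2) + n = n * n := by
    rw [Nat.mul_div_cancel' (Nat.even_mul_pred_self n).two_dvd]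
    cases n with
    | zero => rfl
    | succ k => simp; ring
  have h8 : ∑ i, ∑ j, (e i * e j - min (e i) (e j)) = 8 := by
    omega
  rcases SM.combi e he1 h8 with ⟨hk, h2⟩ | ⟨i0, hi0, hj, hk⟩
  · left
    let σ : Fin 2 ≃ ι := (Fintype.equivFinOfCardEq hk).symm
    refine ⟨φ.trans ((SM.reindex _ σ).trans ((SM.splitFirst _).trans (MulEquiv.prodCongr (SM.zcongr (by rw [he, h2])) ?_)))⟩
    exact (MulEquiv.piUnique _).trans (SM.zcongr (by rw [he, h2]))
  · right
    let σ0 : Fin 4 ≃ ι := (Fintype.equivFinOfCardEq hk).symm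
    let σ : Fin 4 ≃ ι := (Equiv.swap 0 (σ0.symm i0)).trans σ0
    have hσ : σ 0 = i0 := by simp [σ]
    refine ⟨φ.trans ((SM.reindex _ σ).trans ((SM.splitFirst _).trans (MulEquiv.prodCongr (SM.zcongr ?_)
      (MulEquiv.piCongrRight fun j => SM.zcongr ?_))))⟩
    · rw [hσ, he, hi0]
    · rw [he, hj, pow_one]
      rw [← hσ]
      intro h
      exact Fin.succ_ne_zero _ (σ.injective h)
end

section
/- Let p be a prime and G an abelian group of order pⁿ whose Schur multiplier has order p^{n(n−1)/2 − 5}. Then G is isomorphic to ℤ/p³ × ℤ/p or to ℤ/p² × (ℤ/p)⁴. -/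
open scoped commutatorElement

@[ext] structure Heis (G A : Type*) [CommGroup G] [AddCommGroup A]
    (β : Additive G →+ Additive G →+ A) where
  a : A
  g : G

namespace Heis
variable {G A : Type*} [CommGroup G] [AddCommGroup A] {β : Additive G →+ Additive G →+ A}

instance : Mul (Heis G A β) := ⟨fun x y => ⟨x.a + y.a + β (.ofMul x.g) (.ofMul y.g), x.g * y.g⟩⟩
instance : One (Heis G A β) := ⟨⟨0, 1⟩⟩
instance : Inv (Heis G A β) := ⟨fun x => ⟨-x.a + β (.ofMul x.g) (.ofMul x.g), x.g⁻¹⟩⟩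
theorem mul_a (x y : Heis G A β) : (x * y).a = x.a + y.a + β (.ofMul x.g) (.ofMul y.g) := rfl
theorem mul_g (x y : Heis G A β) : (x * y).g = x.g * y.g := rfl
theorem one_a : (1 : Heis G A β).a = 0 := rfl
theorem one_g : (1 : Heis G A β).g = 1 := rfl
theorem inv_a (x : Heis G A β) : (x⁻¹).a = -x.a + β (.ofMul x.g) (.ofMul x.g) := rfl
theorem inv_g (x : Heis G A β) : (x⁻¹).g = x.g⁻¹ := rfl

instance : Group (Heis G A β) := Group.ofLeftAxioms
  (fun x y z => by
    ext
    · simp only [mul_a, mul_g, ofMul_mul, map_add, AddMonoidHom.add_apply]; abel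
    · simp only [mul_g, mul_assoc])
  (fun x => by
    ext
    · simp [mul_a, one_a, one_g]
    · simp [mul_g, one_g])
  (fun x => by
    ext
    · simp [mul_a, inv_a, one_a, inv_g]
    · simp [mul_g, inv_g, one_g])

def proj : Heis G A β →* G := ⟨⟨fun x => x.g, rfl⟩, fun _ _ => rfl⟩

theorem comm_eq (x y : G) : ⁅(⟨0, x⟩ : Heis G A β), (⟨0, y⟩ : Heis G A β)⁆ =
    (⟨β (.ofMul x) (.ofMul y) - β (.ofMul y) (.ofMul x), 1⟩ : Heis G A β) := by
  rw [commutatorElement_def, mul_inv_eq_iff_eq_mul, mul_inv_eq_iff_eq_mul]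
  ext
  · simp [mul_a, mul_g]
  · simp [mul_g, mul_comm]

theorem central (x y : Heis G A β) (h : y.g = 1) : x * y = y * x := by
  ext
  · simp [mul_a, h, add_comm]
  · simp [mul_g, h]

end Heis

theorem pi_zmod_top {ι : Type*} [Finite ι] [DecidableEq ι] (d : ι → ℕ)
    (H : AddSubgroup (∀ i, ZMod (d i))) (h : ∀ i, Pi.single i 1 ∈ H) : H = ⊤ := by
  classical
  have := Fintype.ofFinite ι
  rw [eq_top_iff]
  intro x _
  rw [← Finset.univ_sum_single x]
  refine sum_mem fun i _ => ?_
  obtain ⟨k, hk⟩ := ZMod.intCast_surjective (x i)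
  have : Pi.single i (x i) = k • (Pi.single i 1 : ∀ i, ZMod (d i)) := by
    rw [← Pi.single_smul, ← hk]; simp
  rw [this]
  exact H.zsmul_mem (h i) k

section comm
variable {Q : Type*} [Group Q]
theorem comm_mul_left' (hc : ∀ u v : Q, ⁅u, v⁆ ∈ Subgroup.center Q) (a b c : Q) : ⁅a * b, c⁆ = ⁅a, c⁆ * ⁅b, c⁆ := by
  have h := Subgroup.mem_center_iff.1 (hc b c)
  have : ⁅a * b, c⁆ = a * ⁅b, c⁆ * a⁻¹ * ⁅a, c⁆ := by simp [commutatorElement_def, mul_assoc]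
  rw [this, h a, mul_inv_cancel_right, ← h]
theorem comm_mul_right' (hc : ∀ u v : Q, ⁅u, v⁆ ∈ Subgroup.center Q) (a b c : Q) : ⁅a, b * c⁆ = ⁅a, b⁆ * ⁅a, c⁆ := by
  rw [← commutatorElement_inv, comm_mul_left' hc, mul_inv_rev, commutatorElement_inv,
    commutatorElement_inv]
  exact Subgroup.mem_center_iff.1 (hc a b) _

/-- left commutator hom -/
def commL (hc : ∀ u v : Q, ⁅u, v⁆ ∈ Subgroup.center Q) (c : Q) : Q →* Q := MonoidHom.mk' (fun a => ⁅a, c⁆) fun a b => comm_mul_left' hc a b c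
def commR (hc : ∀ u v : Q, ⁅u, v⁆ ∈ Subgroup.center Q) (c : Q) : Q →* Q := MonoidHom.mk' (fun a => ⁅c, a⁆) fun a b => comm_mul_right' hc c a b
end comm

section upper
variable {k : ℕ} (m : Fin k → ℕ)

abbrev Prs (k : ℕ) := {q : Fin k × Fin k // q.1 < q.2}
abbrev AA := ∀ q : Prs k, ZMod ((m q.1.1).gcd (m q.1.2))

theorem gens {G : Type*} [CommGroup G] (e : G ≃* ∀ i, Multiplicative (ZMod (m i)))
   (S : Subgroup G) (h : ∀ i, e.symm (Pi.mulSingle i (.ofAdd 1)) ∈ S) : S = ⊤ := by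
  let e' : (∀ i, ZMod (m i)) →+ Additive G :=
    { toFun := fun x => .ofMul (e.symm (fun i => .ofAdd (x i)))
      map_zero' := by
        change Additive.ofMul (e.symm 1) = 0
        simp
      map_add' := fun x y => by
        rw [← ofMul_mul, ← map_mul]; rfl }
  have := pi_zmod_top m (S.toAddSubgroup.comap e') (fun i => by
    have h2 := h i
    change e.symm (fun j => .ofAdd ((Pi.single i 1 : ∀ i, ZMod (m i)) j)) ∈ S
    convert h2 using 2
    funext j
    by_cases hj : j = i
    · subst hj; simp
    · simp [hj])
  rw [eq_top_iff]
  intro x _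
  have h3 : (fun i => (e x i).toAdd) ∈ S.toAddSubgroup.comap e' := by rw [this]; trivial
  change e.symm (e x) ∈ S at h3
  simpa using h3

theorem exists_hom {B : Type*} [AddCommGroup B] (z : Prs k → B)
    (hz : ∀ q : Prs k, ((m q.1.1).gcd (m q.1.2)) • z q = 0) :
    ∃ ψ : AA m →+ B, ∀ q, ψ (Pi.single q 1) = z q := by
  classical
  let ψq : ∀ q : Prs k, ZMod ((m q.1.1).gcd (m q.1.2)) →+ B := fun q =>
    ZMod.lift _ ⟨zmultiplesHom _ (z q), by simpa using hz q⟩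
  have hψq : ∀ q, ψq q 1 = z q := fun q => by
    have := ZMod.lift_coe ((m q.1.1).gcd (m q.1.2))
      ⟨zmultiplesHom _ (z q), by simpa using hz q⟩ 1
    simpa using this
  refine ⟨∑ q, (ψq q).comp (Pi.evalAddMonoidHom _ q), fun q => ?_⟩
  simp only [AddMonoidHom.finsetSum_apply, AddMonoidHom.comp_apply, Pi.evalAddMonoidHom_apply]
  rw [Finset.sum_eq_single q]
  · simp [hψq]
  · intro b _ hb
    rw [Pi.single_eq_of_ne hb, map_zero]
  · simp

theorem upper {G : Type*} [CommGroup G] (e : G ≃* ∀ i, Multiplicative (ZMod (m i)))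
    (hm : ∀ i, m i ≠ 0)
    {Q : Type*} [Group Q] (f : Q →* G) (hf : Function.Surjective f)
    (hker : f.ker ≤ Subgroup.center Q) :
    Finite (commutator Q) ∧ Nat.card (commutator Q) ≤ Nat.card (AA m) := by
  classical
  have hNZ : ∀ q : Prs k, NeZero ((m q.1.1).gcd (m q.1.2)) := fun q =>
    ⟨fun h => hm _ (Nat.gcd_eq_zero_iff.1 h).1⟩
  have hc : ∀ u v : Q, ⁅u, v⁆ ∈ Subgroup.center Q := fun u v => hker (by
    rw [MonoidHom.mem_ker, map_commutatorElement, commutatorElement_eq_one_iff_mul_comm, mul_comm])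
  choose t ht using fun i => hf (e.symm (Pi.mulSingle i (.ofAdd 1)))
  have htm : ∀ i, t i ^ m i ∈ Subgroup.center Q := fun i => hker (by
    rw [MonoidHom.mem_ker, map_pow, ht, ← map_pow, ← Pi.mulSingle_pow, ← ofAdd_nsmul]
    simp)
  have hS : ∀ S : Subgroup Q, Subgroup.center Q ≤ S → (∀ i, t i ∈ S) → S = ⊤ := by
    intro S h1 h2
    have h3 : S.map f = ⊤ := gens m e _ fun i => ⟨t i, h2 i, ht i⟩
    have h4 := Subgroup.comap_map_eq_self (f := f) (H := S) (hker.trans h1)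
    rw [← h4, h3, Subgroup.comap_top]
  let _ : CommGroup (Subgroup.center Q) :=
    { (inferInstance : Group (Subgroup.center Q)) with
      mul_comm := fun a b => Subtype.ext (Subgroup.mem_center_iff.1 b.2 a) }
  let z : Prs k → Additive (Subgroup.center Q) := fun q => .ofMul ⟨⁅t q.1.1, t q.1.2⁆, hc _ _⟩
  have hz : ∀ q : Prs k, ((m q.1.1).gcd (m q.1.2)) • z q = 0 := by
    intro q
    have h1 : (m q.1.1) • z q = 0 := by
      apply Additive.toMul.injective
      apply Subtype.ext
      change ⁅t q.1.1, t q.1.2⁆ ^ (m q.1.1) = 1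
      have := (map_pow (commL hc (t q.1.2)) (t q.1.1) (m q.1.1)).symm
      refine this.trans ?_
      change ⁅t q.1.1 ^ m q.1.1, t q.1.2⁆ = 1
      rw [commutatorElement_eq_one_iff_mul_comm]
      exact (Subgroup.mem_center_iff.1 (htm q.1.1) _).symm
    have h2 : (m q.1.2) • z q = 0 := by
      apply Additive.toMul.injective
      apply Subtype.ext
      change ⁅t q.1.1, t q.1.2⁆ ^ (m q.1.2) = 1
      have := (map_pow (commR hc (t q.1.1)) (t q.1.2) (m q.1.2)).symm
      refine this.trans ?_
      change ⁅t q.1.1, t q.1.2 ^ m q.1.2⁆ = 1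
      rw [commutatorElement_eq_one_iff_mul_comm]
      exact (Subgroup.mem_center_iff.1 (htm q.1.2) _)
    exact addOrderOf_dvd_iff_nsmul_eq_zero.1
      (Nat.dvd_gcd (addOrderOf_dvd_of_nsmul_eq_zero h1) (addOrderOf_dvd_of_nsmul_eq_zero h2))
  obtain ⟨ψ, hψ⟩ := exists_hom m z hz
  let K : Subgroup Q := (AddSubgroup.toSubgroup' ψ.range).map (Subgroup.center Q).subtype
  have hK : ∀ i j, ⁅t i, t j⁆ ∈ K := by
    have key : ∀ i j, i < j → ⁅t i, t j⁆ ∈ K := fun i j h =>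
      ⟨(z ⟨(i, j), h⟩).toMul, ⟨_, hψ _⟩, rfl⟩
    intro i j
    rcases lt_trichotomy i j with h | h | h
    · exact key i j h
    · subst h; rw [commutatorElement_self]; exact K.one_mem
    · rw [← commutatorElement_inv]; exact K.inv_mem (key j i h)
  have hK1 : ∀ i, ∀ v : Q, ⁅t i, v⁆ ∈ K := by
    intro i v
    have : K.comap (commR hc (t i)) = ⊤ := hS _ (fun x hx => by
      change ⁅t i, x⁆ ∈ K
      rw [commutatorElement_eq_one_iff_mul_comm.2 (Subgroup.mem_center_iff.1 hx _)]
      exact K.one_mem) (hK i)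
    have h : v ∈ K.comap (commR hc (t i)) := by rw [this]; trivial
    exact h
  have hK2 : ∀ u v : Q, ⁅u, v⁆ ∈ K := by
    intro u v
    have : K.comap (commL hc v) = ⊤ := hS _ (fun x hx => by
      change ⁅x, v⁆ ∈ K
      rw [commutatorElement_eq_one_iff_mul_comm.2 (Subgroup.mem_center_iff.1 hx _).symm]
      exact K.one_mem) (fun i => hK1 i v)
    have h : u ∈ K.comap (commL hc v) := by rw [this]; trivial
    exact h
  have hle : commutator Q ≤ K := by
    rw [commutator_def, Subgroup.commutator_le]
    exact fun u _ v _ => hK2 u v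
  have hfin : Finite (AA m) := inferInstance
  let s : AA m → K := fun a => ⟨((ψ a).toMul : Subgroup.center Q), ⟨(ψ a).toMul, ⟨a, rfl⟩, rfl⟩⟩
  have hs : Function.Surjective s := by
    rintro ⟨_, ⟨_, ⟨a, ha⟩, rfl⟩⟩
    exact ⟨a, Subtype.ext (by exact congrArg (fun w : Additive (Subgroup.center Q) => (w.toMul : Q)) ha)⟩
  have hKf : Finite K := Finite.of_surjective s hs
  exact ⟨Finite.of_injective _ (Subgroup.inclusion_injective hle),
    (Nat.card_le_card_of_injective _ (Subgroup.inclusion_injective hle)).trans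
      (Nat.card_le_card_of_surjective s hs)⟩

end upper

section lower
variable {k : ℕ} (m : Fin k → ℕ)

/-- coordinate -/
def crd {G : Type*} [CommGroup G] (e : G ≃* ∀ i, Multiplicative (ZMod (m i))) (i : Fin k) :
    Additive G →+ ZMod (m i) :=
  AddMonoidHom.mk' (fun g => (e g.toMul i).toAdd) fun a b => by simp

/-- the bilinear cocycle -/
def bet {G : Type*} [CommGroup G] (e : G ≃* ∀ i, Multiplicative (ZMod (m i))) :
    Additive G →+ Additive G →+ AA m :=
  AddMonoidHom.mk' (fun g => AddMonoidHom.mk' (fun h q =>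
    ZMod.castHom (Nat.gcd_dvd_left (m q.1.1) (m q.1.2)) _ (crd m e q.1.1 g) *
    ZMod.castHom (Nat.gcd_dvd_right (m q.1.1) (m q.1.2)) _ (crd m e q.1.2 h))
    (fun a b => by funext q; simp only [map_add, mul_add, Pi.add_apply]))
    (fun a b => by
      refine AddMonoidHom.ext fun h => funext fun q => ?_
      simp only [map_add, add_mul, AddMonoidHom.mk'_apply, AddMonoidHom.add_apply, Pi.add_apply])

theorem bet_apply {G : Type*} [CommGroup G] (e : G ≃* ∀ i, Multiplicative (ZMod (m i)))
    (i j : Fin k) (q : Prs k) :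
    bet m e (.ofMul (e.symm (Pi.mulSingle i (.ofAdd 1)))) 
      (.ofMul (e.symm (Pi.mulSingle j (.ofAdd 1)))) q = 
      if q.1.1 = i ∧ q.1.2 = j then 1 else 0 := by
  have key : ∀ a b, crd m e a (.ofMul (e.symm (Pi.mulSingle b (.ofAdd 1)))) =
      if a = b then 1 else 0 := by
    intro a b
    change ((e (e.symm _)) a).toAdd = _
    rw [e.apply_symm_apply]
    by_cases h : a = b
    · subst h; simp
    · simp [h]
  change ZMod.castHom (Nat.gcd_dvd_left (m q.1.1) (m q.1.2)) (ZMod ((m q.1.1).gcd (m q.1.2)))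
      (crd m e q.1.1 _) * ZMod.castHom (Nat.gcd_dvd_right (m q.1.1) (m q.1.2))
      (ZMod ((m q.1.1).gcd (m q.1.2))) (crd m e q.1.2 _) = _
  rw [key, key]
  by_cases h1 : q.1.1 = i
  · by_cases h2 : q.1.2 = j
    · rw [if_pos h1, if_pos h2, if_pos ⟨h1, h2⟩, map_one, map_one, one_mul]
    · rw [if_neg h2, if_neg (fun h : _ ∧ _ => h2 h.2), map_zero, mul_zero]
  · rw [if_neg h1, if_neg (fun h : _ ∧ _ => h1 h.1), map_zero, zero_mul]

theorem lower {G : Type*} [CommGroup G] (e : G ≃* ∀ i, Multiplicative (ZMod (m i)))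
    (C : Subgroup (FreeGroup G)) [C.Normal] (hC : C = ⁅(⊤ : Subgroup (FreeGroup G)), (presentation G).ker⁆)
    (hfin : Finite (commutator (FreeGroup G ⧸ C))) :
    Nat.card (AA m) ≤ Nat.card (commutator (FreeGroup G ⧸ C)) := by
  classical
  let Φ : FreeGroup G →* Heis G (AA m) (bet m e) := FreeGroup.lift fun g => ⟨0, g⟩
  have hΦ : Heis.proj.comp Φ = presentation G := by
    ext g
    simp [Φ, presentation, Heis.proj]
  have hCk : C ≤ Φ.ker := by
    rw [hC, Subgroup.commutator_le]
    intro u _ r hr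
    rw [MonoidHom.mem_ker, map_commutatorElement, commutatorElement_eq_one_iff_mul_comm]
    apply Heis.central
    rw [← hΦ] at hr
    exact hr
  let Ψ : FreeGroup G ⧸ C →* Heis G (AA m) (bet m e) := QuotientGroup.lift C Φ hCk
  let T := (commutator (FreeGroup G ⧸ C)).map Ψ
  let H : AddSubgroup (AA m) :=
    { carrier := {a | (⟨a, 1⟩ : Heis G (AA m) (bet m e)) ∈ T}
      zero_mem' := T.one_mem
      add_mem' := fun {a b} ha hb => by
        have := T.mul_mem ha hb
        change (⟨a + b, 1⟩ : Heis G (AA m) (bet m e)) ∈ T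
        convert this using 1
        ext1
        · simp [Heis.mul_a]
        · simp [Heis.mul_g]
      neg_mem' := fun {a} ha => by
        have := T.inv_mem ha
        change (⟨-a, 1⟩ : Heis G (AA m) (bet m e)) ∈ T
        convert this using 1
        ext1
        · simp [Heis.inv_a]
        · simp [Heis.inv_g] }
  have hH : H = ⊤ := by
    refine pi_zmod_top (fun q : Prs k => (m q.1.1).gcd (m q.1.2)) H ?_
    intro q
    let gi : G := e.symm (Pi.mulSingle q.1.1 (.ofAdd 1))
    let gj : G := e.symm (Pi.mulSingle q.1.2 (.ofAdd 1))
    have h1 : Ψ ⁅((FreeGroup.of gi : FreeGroup G) : FreeGroup G ⧸ C), 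
      ((FreeGroup.of gj : FreeGroup G) : FreeGroup G ⧸ C)⁆ ∈ T :=
      ⟨_, Subgroup.commutator_mem_commutator trivial trivial, rfl⟩
    have h2 : ∀ g, Ψ ((FreeGroup.of g : FreeGroup G) : FreeGroup G ⧸ C) = ⟨0, g⟩ := by
      intro g
      change Φ (FreeGroup.of g) = _
      simp [Φ]
    rw [map_commutatorElement, h2, h2, Heis.comm_eq] at h1
    change (⟨_, 1⟩ : Heis G (AA m) (bet m e)) ∈ T
    convert h1 using 2
    funext r
    rw [Pi.sub_apply, bet_apply, bet_apply]
    have hr := r.2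
    have hq := q.2
    have h3 : ¬ (r.1.1 = q.1.2 ∧ r.1.2 = q.1.1) := by
      rintro ⟨h, h'⟩
      rw [h, h'] at hr
      exact absurd hq (not_lt.2 hr.le)
    rw [if_neg h3, sub_zero]
    by_cases h : r = q
    · subst h; simp
    · rw [if_neg, Pi.single_eq_of_ne h]
      rintro ⟨h4, h5⟩
      exact h (Subtype.ext (Prod.ext h4 h5))
  have hmem : ∀ a : AA m, (⟨a, 1⟩ : Heis G (AA m) (bet m e)) ∈ T := fun a => by
    have : a ∈ H := by rw [hH]; trivial
    exact this
  let s : AA m → T := fun a => ⟨⟨a, 1⟩, hmem a⟩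
  have hs : Function.Injective s := fun a b h => congrArg (fun x : T => x.1.a) h
  have hsurj : Function.Surjective (Ψ.subgroupMap (commutator (FreeGroup G ⧸ C))) :=
    Ψ.subgroupMap_surjective _
  have hT : Finite T := Finite.of_surjective _ hsurj
  exact (Nat.card_le_card_of_injective s hs).trans (Nat.card_le_card_of_surjective _ hsurj)

theorem card_schur_eq {G : Type*} [CommGroup G] 
    (C : Subgroup (FreeGroup G)) [C.Normal]
    (hC : C = ⁅(⊤ : Subgroup (FreeGroup G)), (presentation G).ker⁆) :
    Nat.card (SchurMultiplier G) = Nat.card (commutator (FreeGroup G ⧸ C)) := by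
  unfold SchurMultiplier
  rw [← hC]
  have hle : commutator (FreeGroup G) ≤ (presentation G).ker := by
    rw [commutator_def, Subgroup.commutator_le]
    intro u _ v _
    rw [MonoidHom.mem_ker, map_commutatorElement, commutatorElement_eq_one_iff_mul_comm, mul_comm]
  rw [inf_eq_right.2 hle]
  let f := (QuotientGroup.mk' C).subgroupMap (commutator (FreeGroup G))
  have hk : C.subgroupOf (commutator (FreeGroup G)) = f.ker := by
    ext x
    rw [Subgroup.mem_subgroupOf, MonoidHom.mem_ker, ← QuotientGroup.eq_one_iff]
    exact ⟨fun h => Subtype.ext h, fun h => congrArg Subtype.val h⟩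
  have hm : (commutator (FreeGroup G)).map (QuotientGroup.mk' C) = commutator (FreeGroup G ⧸ C) := by
    rw [commutator_def, Subgroup.map_commutator, commutator_def, Subgroup.map_top_of_surjective _ (QuotientGroup.mk'_surjective C)]
  rw [hk, ← hm]
  exact Nat.card_congr (QuotientGroup.quotientKerEquivOfSurjective f
    (MonoidHom.subgroupMap_surjective _ _)).toEquiv

theorem card_schur {G : Type*} [CommGroup G] (e : G ≃* ∀ i, Multiplicative (ZMod (m i)))
    (hm : ∀ i, m i ≠ 0) : Nat.card (SchurMultiplier G) = Nat.card (AA m) := by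
  obtain ⟨C, hC⟩ : ∃ C, C = ⁅(⊤ : Subgroup (FreeGroup G)), (presentation G).ker⁆ := ⟨_, rfl⟩
  have hN : C.Normal := by rw [hC]; infer_instance
  have hCk : C ≤ (presentation G).ker := by rw [hC]; exact Subgroup.commutator_le_right _ _
  rw [card_schur_eq C hC]
  have hs : Function.Surjective (presentation G) := fun g => ⟨FreeGroup.of g, by simp [presentation]⟩
  obtain ⟨h1, h2⟩ := upper m e hm (QuotientGroup.lift C (presentation G) hCk)
    (fun g => by obtain ⟨x, hx⟩ := hs g; exact ⟨x, hx⟩) (by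
      intro x hx
      obtain ⟨r, rfl⟩ := QuotientGroup.mk_surjective x
      rw [Subgroup.mem_center_iff]
      intro y
      obtain ⟨u, rfl⟩ := QuotientGroup.mk_surjective y
      have hr : r ∈ (presentation G).ker := hx
      rw [← commutatorElement_eq_one_iff_mul_comm]
      change ((⁅u, r⁆ : FreeGroup G) : FreeGroup G ⧸ C) = 1
      rw [QuotientGroup.eq_one_iff, hC]
      exact Subgroup.commutator_mem_commutator trivial hr)
  exact le_antisymm h2 (lower m e C hC h1)

end lower

theorem sum_prs {k : ℕ} (f : Fin k → Fin k → ℕ) (hf : ∀ i j, f i j = f j i) :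
    ∑ i, ∑ j, f i j = 2 * (∑ q : Prs k, f q.1.1 q.1.2) + ∑ i, f i i := by
  have h1 : ∑ q : Prs k, f q.1.1 q.1.2 = ∑ i, ∑ j, if i < j then f i j else 0 := by
    rw [← Fintype.sum_prod_type' (f := fun i j => if i < j then f i j else 0),
      ← Finset.sum_filter]
    exact (Finset.sum_subtype (Finset.univ.filter fun x : Fin k × Fin k => x.1 < x.2)
      (by simp) (fun x => f x.1 x.2)).symm
  have h2 : ∑ i, ∑ j, f i j = ∑ i, ∑ j, ((if i < j then f i j else 0) +
      (if j < i then f j i else 0) + if i = j then f i j else 0) := by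
    refine Finset.sum_congr rfl fun i _ => Finset.sum_congr rfl fun j _ => ?_
    rcases lt_trichotomy i j with h | h | h
    · simp [h, h.not_gt, h.ne]
    · simp [h]
    · simp [h, h.not_gt, h.ne', hf i j]
  rw [h2]
  simp only [Finset.sum_add_distrib]
  rw [Finset.sum_comm (f := fun i j => if j < i then f j i else 0), h1]
  simp
  ring

theorem comb {k : ℕ} (e : Fin k → ℕ) (he : ∀ i, 1 ≤ e i)
    (h : ∑ i, ∑ j, e i * e j = ∑ i, ∑ j, min (e i) (e j) + 10) :
    (k = 2 ∧ ∃ i, e i = 3 ∧ ∀ j, j ≠ i → e j = 1) ∨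
    (k = 5 ∧ ∃ i, e i = 2 ∧ ∀ j, j ≠ i → e j = 1) := by
  have hmin : ∀ i j, min (e i) (e j) ≤ e i * e j := fun i j =>
    (min_le_left _ _).trans (Nat.le_mul_of_pos_right _ (he j))
  -- the defect
  have hd : ∑ i, ∑ j, (e i * e j - min (e i) (e j)) = 10 := by
    have : ∑ i, ∑ j, (e i * e j - min (e i) (e j)) + ∑ i, ∑ j, min (e i) (e j)
        = ∑ i, ∑ j, e i * e j := by
      simp only [← Finset.sum_add_distrib]
      exact Finset.sum_congr rfl fun i _ => Finset.sum_congr rfl fun j _ =>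
        Nat.sub_add_cancel (hmin i j)
    omega
  have h3 : ∀ i, e i ≤ 3 := by
    intro i
    by_contra! hi
    have h1 : e i * e i - min (e i) (e i) ≤ 10 := by
      rw [← hd]
      exact (Finset.single_le_sum (f := fun j => e i * e j - min (e i) (e j))
        (fun _ _ => Nat.zero_le _) (Finset.mem_univ i)).trans
        (Finset.single_le_sum (f := fun i => ∑ j, (e i * e j - min (e i) (e j)))
        (fun _ _ => Nat.zero_le _) (Finset.mem_univ i))
    rw [min_self] at h1
    have : e i * 4 ≤ e i * e i := Nat.mul_le_mul_left _ hi
    omega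
  by_cases hex : ∃ i, e i = 3
  · left
    obtain ⟨i, hi⟩ := hex
    have hrow : ∀ a, (if a = i then 6 + 2 * (k - 1) else 2) ≤
        ∑ j, (e a * e j - min (e a) (e j)) := by
      intro a
      split_ifs with ha
      · subst ha
        rw [← Finset.add_sum_erase _ _ (Finset.mem_univ a)]
        have : ∑ j ∈ Finset.univ.erase a, 2 ≤
            ∑ j ∈ Finset.univ.erase a, (e a * e j - min (e a) (e j)) := by
          refine Finset.sum_le_sum fun j _ => ?_
          have := he j; have := h3 j
          rw [hi]; omega
        simp only [Finset.sum_const, Finset.card_erase_of_mem (Finset.mem_univ a),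
          Finset.card_univ, Fintype.card_fin, smul_eq_mul] at this
        rw [hi]
        rw [hi] at this
        omega
      · refine le_trans ?_ (Finset.single_le_sum (f := fun j => e a * e j - min (e a) (e j))
          (fun _ _ => Nat.zero_le _) (Finset.mem_univ i))
        have := he a; have := h3 a
        simp only [hi]; omega
    have hsum := Finset.sum_le_sum fun a (_ : a ∈ Finset.univ) => hrow a
    rw [hd, ← Finset.add_sum_erase _ _ (Finset.mem_univ i), if_pos rfl,
      Finset.sum_congr rfl (g := fun _ => 2) (fun a ha => if_neg (Finset.ne_of_mem_erase ha))] at hsum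
    simp only [Finset.sum_const, Finset.card_erase_of_mem (Finset.mem_univ i),
          Finset.card_univ, Fintype.card_fin, smul_eq_mul] at hsum
    have hk : k = 0 ∨ k = 1 ∨ k = 2 := by omega
    rcases hk with rfl | rfl | rfl
    · exact i.elim0
    · have : i = 0 := Subsingleton.elim _ _
      subst this
      simp [hi] at hd
    · refine ⟨rfl, i, hi, ?_⟩
      simp only [Fin.sum_univ_two] at hd
      intro j hj
      have hj1 := he j
      have hj3 := h3 j
      have hv : e j = 1 ∨ e j = 2 ∨ e j = 3 := by omega
      fin_cases i <;> fin_cases j <;> simp at hj hi hv ⊢ <;> rcases hv with hv | hv | hv <;>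
        simp [hi, hv] at hd ⊢
  · right
    have h2 : ∀ i, e i = 1 ∨ e i = 2 := fun i => by
      have := he i; have := h3 i
      have : e i ≠ 3 := fun h => hex ⟨i, h⟩
      omega
    have ht : ∀ i j, e i * e j - min (e i) (e j) =
        (if e i = 2 then 1 else 0) + (if e j = 2 then 1 else 0) := by
      intro i j
      rcases h2 i with h | h <;> rcases h2 j with h' | h' <;> simp [h, h']
    simp only [ht, Finset.sum_add_distrib, Finset.sum_const, Finset.card_univ, Fintype.card_fin,
      smul_eq_mul, ← Finset.mul_sum, ← Finset.card_filter] at hd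
    set s := Finset.univ.filter fun i => e i = 2 with hs
    have hk : k * s.card = 5 := by omega
    have hle : s.card ≤ k := by simpa using Finset.card_le_univ s
    have hk5 : k ∣ 5 := ⟨_, hk.symm⟩
    rcases (Nat.dvd_prime Nat.prime_five).1 hk5 with h | h
    · subst h; omega
    · refine ⟨h, ?_⟩
      have : s.card = 1 := by subst h; omega
      obtain ⟨i, hi⟩ := Finset.card_eq_one.1 this
      refine ⟨i, ?_, ?_⟩
      · have : i ∈ s := by rw [hi]; simp
        simpa [hs] using this
      · intro j hj
        refine (h2 j).resolve_right fun h => hj ?_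
        have : j ∈ s := by simp [hs, h]
        rw [hi] at this
        simpa using this

theorem pi_split {k : ℕ} (i : Fin (k + 1)) (m : Fin (k + 1) → ℕ) (a b : ℕ) (h1 : m i = a)
    (h2 : ∀ j, j ≠ i → m j = b) :
    Nonempty ((∀ i, Multiplicative (ZMod (m i))) ≃* 
      Multiplicative (ZMod a) × (Fin k → Multiplicative (ZMod b))) := by
  subst h1
  have h3 : ∀ j : Fin k, m (i.succAbove j) = b := fun j => h2 _ (Fin.succAbove_ne i j)
  refine ⟨MulEquiv.trans (N := Multiplicative (ZMod (m i)) ×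
    (∀ j : Fin k, Multiplicative (ZMod (m (i.succAbove j))))) 
    { (Fin.insertNthEquiv (fun i => Multiplicative (ZMod (m i))) i).symm with
      map_mul' := fun _ _ => rfl } ?_⟩
  refine MulEquiv.prodCongr (MulEquiv.refl _) (MulEquiv.piCongrRight fun j => ?_)
  exact AddEquiv.toMultiplicative (ZMod.ringEquivCongr (h3 j)).toAddEquiv

theorem main_aux (p n k : ℕ) (hp : p.Prime)
    (G : Type*) [CommGroup G] (hG : Nat.card G = p ^ n)
    (hM : Nat.card (SchurMultiplier G) * p ^ 5 = p ^ (n * (n - 1) / 2)) (m : Fin k → ℕ)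
    (hm : ∀ i, 1 < m i) (e : G ≃* ∀ i, Multiplicative (ZMod (m i))) :
    Nonempty (G ≃* Multiplicative (ZMod (p ^ 3)) × Multiplicative (ZMod p)) ∨
      Nonempty (G ≃* Multiplicative (ZMod (p ^ 2)) × (Fin 4 → Multiplicative (ZMod p))) := by
  have hm0 : ∀ i, m i ≠ 0 := fun i => by have := hm i; omega
  have hcard : ∏ i, m i = p ^ n := by
    rw [← hG, Nat.card_congr e.toEquiv, Nat.card_pi]
    refine Finset.prod_congr rfl fun i _ => ?_
    exact (Nat.card_zmod (m i)).symm
  have hpow : ∀ i, ∃ a, m i = p ^ a := fun i => by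
    obtain ⟨a, _, ha⟩ := (Nat.dvd_prime_pow hp).1
      (hcard ▸ Finset.dvd_prod_of_mem m (Finset.mem_univ i))
    exact ⟨a, ha⟩
  choose x hx using hpow
  have hx1 : ∀ i, 1 ≤ x i := fun i => by
    by_contra! h
    have h0 : x i = 0 := by omega
    have := hm i
    rw [hx i, h0] at this
    simp at this
  have hinj := Nat.pow_right_injective hp.two_le
  have hn : ∑ i, x i = n := by
    apply hinj
    change p ^ _ = p ^ _
    rw [← hcard, ← Finset.prod_pow_eq_pow_sum]
    exact Finset.prod_congr rfl fun i _ => (hx i).symm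
  have hgcd : ∀ a b, (p ^ a).gcd (p ^ b) = p ^ min a b := by
    intro a b
    rcases le_total a b with h | h
    · rw [min_eq_left h, Nat.gcd_eq_left (pow_dvd_pow p h)]
    · rw [min_eq_right h, Nat.gcd_eq_right (pow_dvd_pow p h)]
  have hA : Nat.card (AA m) = p ^ (∑ q : Prs k, min (x q.1.1) (x q.1.2)) := by
    rw [Nat.card_pi, ← Finset.prod_pow_eq_pow_sum]
    refine Finset.prod_congr rfl fun q _ => ?_
    rw [Nat.card_zmod, hx, hx, hgcd]
  rw [card_schur m e hm0, hA, ← pow_add] at hM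
  have hM' := hinj hM
  have hs := sum_prs (fun i j => min (x i) (x j)) (fun i j => min_comm _ _)
  simp only [min_self] at hs
  have hdiv : 2 * (n * (n - 1) / 2) = n * (n - 1) :=
    Nat.mul_div_cancel' (Nat.even_mul_pred_self n).two_dvd
  have hnn : n * (n - 1) + n = n * n := by
    cases n with
    | zero => rfl
    | succ n => simp only [Nat.add_sub_cancel]; ring
  have hsq : ∑ i, ∑ j, x i * x j = n * n := by
    rw [← hn, Finset.sum_mul_sum]
  have hc := comb x hx1 (by omega)
  rcases hc with ⟨rfl, i, hi, hj⟩ | ⟨rfl, i, hi, hj⟩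
  · left
    obtain ⟨f⟩ := pi_split i m (p ^ 3) p (by rw [hx, hi]) (fun j h => by rw [hx, hj j h, pow_one])
    exact ⟨(e.trans f).trans (MulEquiv.prodCongr (MulEquiv.refl _)
      (MulEquiv.funUnique (Fin 1) (Multiplicative (ZMod p))))⟩
  · right
    obtain ⟨f⟩ := pi_split i m (p ^ 2) p (by rw [hx, hi]) (fun j h => by rw [hx, hj j h, pow_one])
    exact ⟨e.trans f⟩

theorem abelian_classification_t_five (p n : ℕ) (hp : p.Prime)
    (G : Type*) [CommGroup G] [Finite G] (hG : Nat.card G = p ^ n)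
    (hM : Nat.card (SchurMultiplier G) * p ^ 5 = p ^ (n * (n - 1) / 2)) :
    Nonempty (G ≃* Multiplicative (ZMod (p ^ 3)) × Multiplicative (ZMod p)) ∨
      Nonempty (G ≃* Multiplicative (ZMod (p ^ 2)) × (Fin 4 → Multiplicative (ZMod p))) := by
  obtain ⟨ι, _, m, hm, ⟨e⟩⟩ := CommGroup.equiv_prod_multiplicative_zmod_of_finite G
  let σ := Fintype.equivFin ι
  let e2 : G ≃* ∀ i, Multiplicative (ZMod (m (σ.symm i))) := e.trans
    { (Equiv.piCongrLeft (fun i => Multiplicative (ZMod (m i))) σ.symm).symm with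
      map_mul' := fun _ _ => rfl }
  exact main_aux p n (Fintype.card ι) hp G hG hM (fun i => m (σ.symm i)) (fun i => hm _) e2
end

section
/- Let p be a prime, G a finite p-group, and N a normal subgroup of G of order pⁿ admitting a complement K (so G = NK and N ∩ K = 1) with |K| = p^m. Assuming M(G) ≅ M(G,N) × M(K) (Ellis's splitting) and Schur's product formula when K is normal (so G ≅ N × K), the order of M(G,N) equals |M(N)| · |N^ab ⊗ K^ab|, and hence divides p^{n(2m+n−1)/2}. -/
open scoped commutatorElement


/- Part 1 : Wiegold's bound -/

theorem ps_dvd_aux {p a r n : ℕ} (hp : p.Prime) (h : r * a ∣ p ^ (n + 1)) (hr : r ≠ 1) :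
    a ∣ p ^ n := by
  obtain ⟨i, hi, rfl⟩ := (Nat.dvd_prime_pow hp).1 (dvd_of_mul_right_dvd h)
  rcases i with _ | i
  · simp at hr
  · have : p * a ∣ p * p ^ n := by
      rw [← pow_succ']
      refine dvd_trans ?_ h
      rw [pow_succ, mul_assoc]
      exact Dvd.intro_left _ rfl
    exact Nat.dvd_of_mul_dvd_mul_left hp.pos this

theorem ps_index_aux {p n : ℕ} (hp : p.Prime) {X : Type*} [Group X] {Z D : Subgroup X}
    (hZ : Z.index ∣ p ^ (n + 1)) (hle : Z ≤ D) {x : X} (hx : x ∈ D) (hxZ : x ∉ Z) :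
    D.index ∣ p ^ n := by
  rw [← Subgroup.relIndex_mul_index hle] at hZ
  refine ps_dvd_aux hp hZ ?_
  intro h
  exact hxZ (Subgroup.relIndex_eq_one.1 h hx)

theorem ps_wiegold {p : ℕ} (hp : p.Prime) (n : ℕ) : ∀ (X : Type*) [Group X],
    (Subgroup.center X).index ∣ p ^ n → Nat.card (commutator X) ∣ p ^ (n * (n - 1) / 2) := by
  have := Fact.mk hp
  induction n with
  | zero =>
    intro X _ h
    have h1 : Subgroup.center X = ⊤ := by simpa using h
    have h2 : commutator X = ⊥ := (commutator_eq_bot_iff_center_eq_top X).2 h1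
    rw [h2]; simp
  | succ n ih =>
    intro X _ h
    by_cases hc : Subgroup.center X = ⊤
    · have h2 : commutator X = ⊥ := (commutator_eq_bot_iff_center_eq_top X).2 hc
      rw [h2]; simp
    have hcard : Nat.card (X ⧸ Subgroup.center X) ∣ p ^ (n + 1) := h
    have : Finite (X ⧸ Subgroup.center X) :=
      Nat.finite_of_card_ne_zero (ne_zero_of_dvd_ne_zero (pow_ne_zero _ hp.ne_zero) hcard)
    have hpg : IsPGroup p (X ⧸ Subgroup.center X) := by
      obtain ⟨i, -, hi⟩ := (Nat.dvd_prime_pow hp).1 hcard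
      exact IsPGroup.of_card hi
    have : Nontrivial (X ⧸ Subgroup.center X) := by
      rwa [QuotientGroup.nontrivial_iff]
    have := hpg.center_nontrivial
    obtain ⟨⟨y, hy⟩, hy1⟩ := exists_ne (1 : Subgroup.center (X ⧸ Subgroup.center X))
    obtain ⟨x, rfl⟩ := QuotientGroup.mk_surjective y
    have hx : x ∉ Subgroup.center X := by
      intro hx
      apply hy1
      ext
      exact (QuotientGroup.eq_one_iff x).2 hx
    have hcom : ∀ g : X, ⁅g, x⁆ ∈ Subgroup.center X := by
      intro g
      rw [← QuotientGroup.eq_one_iff]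
      have := Subgroup.mem_center_iff.1 hy (g : X ⧸ Subgroup.center X)
      have h3 : ((⁅g, x⁆ : X) : X ⧸ Subgroup.center X)
        = ⁅(g : X ⧸ Subgroup.center X), (x : X ⧸ Subgroup.center X)⁆ := rfl
      rw [h3, commutatorElement_eq_one_iff_mul_comm]
      exact this
    let φ : X →* X := MonoidHom.mk' (fun g => ⁅g, x⁆) (by
      intro a b
      have h1 : a * ⁅b, x⁆ = ⁅b, x⁆ * a := Subgroup.mem_center_iff.1 (hcom b) a
      have h2 : ⁅a, x⁆ * ⁅b, x⁆ = ⁅b, x⁆ * ⁅a, x⁆ := Subgroup.mem_center_iff.1 (hcom b) _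
      rw [h2]
      calc ⁅a * b, x⁆ = (a * ⁅b, x⁆) * x * a⁻¹ * x⁻¹ := by
            simp only [commutatorElement_def]; group
        _ = _ := by rw [h1]; simp only [commutatorElement_def]; group)
    have hφ : ∀ g, φ g = ⁅g, x⁆ := fun g => rfl
    have hB : φ.range ≤ Subgroup.center X := by
      rintro _ ⟨g, rfl⟩; exact hcom g
    have : φ.range.Normal := ⟨fun b hb g => by rw [Subgroup.mem_center_iff.1 (hB hb) g, mul_inv_cancel_right]; exact hb⟩
    have hcardB : Nat.card φ.range ∣ p ^ n := by
      rw [← Subgroup.index_ker]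
      refine ps_index_aux hp h (x := x) ?_ ?_ hx
      · intro z hz
        rw [MonoidHom.mem_ker, hφ, commutatorElement_eq_one_iff_mul_comm]
        exact (Subgroup.mem_center_iff.1 hz x).symm
      · rw [MonoidHom.mem_ker, hφ, commutatorElement_self]
    have hY : (Subgroup.center (X ⧸ φ.range)).index ∣ p ^ n := by
      rw [← Subgroup.index_comap_of_surjective _ (QuotientGroup.mk'_surjective φ.range)]
      refine ps_index_aux hp h (x := x) ?_ ?_ hx
      · intro z hz
        rw [Subgroup.mem_comap, Subgroup.mem_center_iff]
        intro g
        obtain ⟨g, rfl⟩ := QuotientGroup.mk'_surjective φ.range g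
        rw [← map_mul, ← map_mul, Subgroup.mem_center_iff.1 hz g]
      · rw [Subgroup.mem_comap, Subgroup.mem_center_iff]
        intro g
        obtain ⟨g, rfl⟩ := QuotientGroup.mk'_surjective φ.range g
        rw [← commutatorElement_eq_one_iff_mul_comm, ← map_commutatorElement]
        exact (QuotientGroup.eq_one_iff _).2 ⟨g, rfl⟩
    have hIH := ih _ hY
    let f : commutator X →* X ⧸ φ.range :=
      (QuotientGroup.mk' φ.range).comp (commutator X).subtype
    have hr : f.range = commutator (X ⧸ φ.range) := by
      rw [MonoidHom.range_comp, Subgroup.range_subtype, commutator_def, Subgroup.map_commutator,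
        commutator_def, ← MonoidHom.range_eq_map,
        MonoidHom.range_eq_top.2 (QuotientGroup.mk'_surjective _)]
    have hk : Nat.card f.ker ∣ Nat.card φ.range := by
      have : f.ker = φ.range.comap (commutator X).subtype := by
        rw [← MonoidHom.comap_ker, QuotientGroup.ker_mk']
      rw [this]
      exact Subgroup.card_comap_dvd_of_injective _ _ (Subgroup.subtype_injective _)
    rw [← Subgroup.card_mul_index f.ker, Subgroup.index_ker, hr]
    refine (mul_dvd_mul (hk.trans hcardB) hIH).trans ?_
    rw [← pow_add]
    apply pow_dvd_pow
    have hkey : (n + 1) * (n + 1 - 1) = n * (n - 1) + 2 * n := by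
      rcases n with _ | n
      · simp
      · simp only [Nat.add_sub_cancel]; ring
    omega

theorem ps_tensor_ss (A B : Type*) [AddCommGroup A] [AddCommGroup B] [Subsingleton A] :
    Subsingleton (TensorProduct ℤ A B) := by
  refine subsingleton_of_forall_eq 0 fun y => ?_
  induction y with
  | zero => rfl
  | add a b ha hb => rw [ha, hb, add_zero]
  | tmul a b => rw [Subsingleton.elim a 0, TensorProduct.zero_tmul]

theorem ps_tensor (k p : ℕ) (hp : p.Prime) (B : Type*) [AddCommGroup B] :
    ∀ (A : Type*) [AddCommGroup A], Nat.card A ∣ p ^ k →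
      Nat.card (TensorProduct ℤ A B) ∣ Nat.card B ^ k := by
  induction k with
  | zero =>
    intro A _ h
    have h1 : Nat.card A = 1 := by simpa using h
    have : Subsingleton A := (Nat.card_eq_one_iff_unique.1 h1).1
    have : Subsingleton (TensorProduct ℤ A B) := ps_tensor_ss A B
    simp
  | succ k ih =>
    intro A _ h
    by_cases hA : Subsingleton A
    · have : Subsingleton (TensorProduct ℤ A B) := ps_tensor_ss A B
      simp
    rw [not_subsingleton_iff_nontrivial] at hA
    obtain ⟨x, hx⟩ := exists_ne (0 : A)
    let Q := A ⧸ AddSubgroup.zmultiples x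
    have hQ : Nat.card Q ∣ p ^ k := by
      rw [← AddSubgroup.card_mul_index (AddSubgroup.zmultiples x)] at h
      refine ps_dvd_aux hp h ?_
      intro h1
      exact hx (by simpa using (AddSubgroup.card_eq_one.1 h1))
    let g : B →+ TensorProduct ℤ A B := (TensorProduct.mk ℤ A B x).toAddMonoidHom
    let S := g.range
    have hS : Nat.card S ∣ Nat.card B :=
      AddSubgroup.card_dvd_of_surjective g.rangeRestrict g.rangeRestrict_surjective
    let q := QuotientAddGroup.mk' S
    let L0 : A →+ B →+ (TensorProduct ℤ A B ⧸ S) :=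
      AddMonoidHom.mk' (fun a => q.comp (TensorProduct.mk ℤ A B a).toAddMonoidHom) (by
        intro a b; ext c; simp)
    let L : Q →+ B →+ (TensorProduct ℤ A B ⧸ S) := QuotientAddGroup.lift _ L0 (by
      rw [AddSubgroup.zmultiples_le]
      rw [AddMonoidHom.mem_ker]
      ext b
      exact (QuotientAddGroup.eq_zero_iff _).2 ⟨b, rfl⟩)
    let T : TensorProduct ℤ Q B →+ (TensorProduct ℤ A B ⧸ S) :=
      TensorProduct.liftAddHom L (by
        intro r m n; simp)
    have hT : Function.Surjective T := by
      intro y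
      obtain ⟨y, rfl⟩ := QuotientAddGroup.mk'_surjective S y
      induction y with
      | zero => exact ⟨0, by simp⟩
      | add a b ha hb =>
        obtain ⟨a', ha⟩ := ha
        obtain ⟨b', hb⟩ := hb
        exact ⟨a' + b', by rw [map_add, map_add, ha, hb]⟩
      | tmul a b =>
        exact ⟨TensorProduct.tmul ℤ (QuotientAddGroup.mk a : Q) b, rfl⟩
    rw [← AddSubgroup.card_mul_index S, pow_succ']
    exact mul_dvd_mul hS ((AddSubgroup.card_dvd_of_surjective T hT).trans (ih _ hQ))

/- Part 2 : the universal central-type extension F/[F,R] -/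

section PSU

/-- `F / [F, R]`. -/
abbrev PSU (G : Type*) [Group G] : Type _ :=
  FreeGroup G ⧸ ⁅(⊤ : Subgroup (FreeGroup G)), (presentation G).ker⁆

theorem ps_comm_le_ker (G : Type*) [Group G] :
    ⁅(⊤ : Subgroup (FreeGroup G)), (presentation G).ker⁆ ≤ (presentation G).ker :=
  Subgroup.commutator_le_right _ _

/-- The projection `F / [F, R] → G`. -/
def psπ (G : Type*) [Group G] : PSU G →* G :=
  QuotientGroup.lift _ (presentation G) (ps_comm_le_ker G)

theorem psπ_mk (G : Type*) [Group G] (x : FreeGroup G) :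
    psπ G (QuotientGroup.mk' _ x) = presentation G x := rfl

theorem psπ_surj (G : Type*) [Group G] : Function.Surjective (psπ G) := by
  intro g
  exact ⟨QuotientGroup.mk' _ (FreeGroup.of g), by rw [psπ_mk]; simp [presentation]⟩

theorem psπ_ker (G : Type*) [Group G] : (psπ G).ker ≤ Subgroup.center (PSU G) := by
  intro x hx
  rw [Subgroup.mem_center_iff]
  intro g
  obtain ⟨x, rfl⟩ := QuotientGroup.mk'_surjective _ x
  obtain ⟨g, rfl⟩ := QuotientGroup.mk'_surjective _ g
  rw [← commutatorElement_eq_one_iff_mul_comm, ← map_commutatorElement]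
  exact (QuotientGroup.eq_one_iff _).2
    (Subgroup.commutator_mem_commutator (Subgroup.mem_top _) hx)

/-- The Schur multiplier as a subgroup of `F / [F, R]`. -/
abbrev psM (G : Type*) [Group G] : Subgroup (PSU G) := (psπ G).ker ⊓ commutator (PSU G)

theorem ps_card (G : Type*) [Group G] :
    Nat.card (SchurMultiplier G) = Nat.card (psM G) := by
  let q := QuotientGroup.mk' (⁅(⊤ : Subgroup (FreeGroup G)), (presentation G).ker⁆)
  let S := (presentation G).ker ⊓ commutator (FreeGroup G)
  let f : S →* PSU G := q.comp S.subtype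
  have hk : f.ker = (⁅(⊤ : Subgroup (FreeGroup G)), (presentation G).ker⁆.subgroupOf S) := by
    rw [← MonoidHom.comap_ker, QuotientGroup.ker_mk']; rfl
  have hc : (commutator (FreeGroup G)).map q = commutator (PSU G) := by
    rw [commutator_def, Subgroup.map_commutator, ← MonoidHom.range_eq_map,
      MonoidHom.range_eq_top.2 (QuotientGroup.mk'_surjective _), commutator_def]
  have hr : f.range = psM G := by
    ext y
    constructor
    · rintro ⟨⟨x, hx1, hx2⟩, rfl⟩
      refine ⟨hx1, ?_⟩
      rw [← hc]
      exact ⟨x, hx2, rfl⟩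
    · rintro ⟨h1, h2⟩
      rw [← hc] at h2
      obtain ⟨x, hx, rfl⟩ := h2
      exact ⟨⟨x, h1, hx⟩, rfl⟩
  have h1 : Nat.card (SchurMultiplier G) =
    (⁅(⊤ : Subgroup (FreeGroup G)), (presentation G).ker⁆.subgroupOf S).index := rfl
  rw [h1, ← hk, Subgroup.index_ker, hr]

theorem ps_lift {G X Q : Type*} [Group G] [Group X] [Group Q] (φ : G →* Q) (f : X →* Q)
    (hf : Function.Surjective f) (hk : f.ker ≤ Subgroup.center X) :
    ∃ ψ : PSU G →* X, ∀ u, f (ψ u) = φ (psπ G u) := by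
  let l : FreeGroup G →* X := FreeGroup.lift fun g => Function.surjInv hf (φ g)
  have hl : f.comp l = φ.comp (presentation G) := by
    ext g
    simp [l, presentation, Function.surjInv_eq]
  have hl' : ∀ x, f (l x) = φ (presentation G x) := fun x => DFunLike.congr_fun hl x
  refine ⟨QuotientGroup.lift _ l ?_, ?_⟩
  · rw [Subgroup.commutator_le]
    intro g _ r hr
    rw [MonoidHom.mem_ker, map_commutatorElement, commutatorElement_eq_one_iff_mul_comm]
    have : l r ∈ f.ker := by
      rw [MonoidHom.mem_ker, hl', MonoidHom.mem_ker.1 hr, map_one]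
    exact Subgroup.mem_center_iff.1 (hk this) _
  · intro u
    obtain ⟨u, rfl⟩ := QuotientGroup.mk'_surjective _ u
    exact hl' u

theorem ps_comm_eq {X Q : Type*} [Group X] [Group Q] (f : X →* Q)
    (hk : f.ker ≤ Subgroup.center X) {x x' y y' : X} (hx : f x = f x') (hy : f y = f y') :
    ⁅x, y⁆ = ⁅x', y'⁆ := by
  have key : ∀ {a b : X}, f a = f b → ∃ z ∈ Subgroup.center X, a = b * z := by
    intro a b h
    refine ⟨b⁻¹ * a, hk ?_, by group⟩
    rw [MonoidHom.mem_ker, map_mul, map_inv, h, inv_mul_cancel]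
  obtain ⟨z, hz, rfl⟩ := key hx
  obtain ⟨w, hw, rfl⟩ := key hy
  rw [Subgroup.mem_center_iff] at hz hw
  simp only [commutatorElement_def, mul_inv_rev]
  calc x' * z * (y' * w) * (z⁻¹ * x'⁻¹) * (w⁻¹ * y'⁻¹)
      = x' * ((z * y') * w) * z⁻¹ * x'⁻¹ * w⁻¹ * y'⁻¹ := by group
    _ = x' * y' * (z * w) * z⁻¹ * x'⁻¹ * w⁻¹ * y'⁻¹ := by rw [← hz]; group
    _ = x' * y' * (w * x'⁻¹) * w⁻¹ * y'⁻¹ := by rw [hw z]; group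
    _ = _ := by rw [← hw]; group

theorem ps_unique {Y X Q : Type*} [Group Y] [Group X] [Group Q] (f : X →* Q)
    (hk : f.ker ≤ Subgroup.center X) (α β : Y →* X) (h : ∀ y, f (α y) = f (β y))
    {y : Y} (hy : y ∈ commutator Y) : α y = β y := by
  have : commutator Y ≤ α.eqLocus β := by
    rw [commutator_def, Subgroup.commutator_le]
    intro a _ b _
    change α _ = β _
    rw [map_commutatorElement, map_commutatorElement]
    exact ps_comm_eq f hk (h a) (h b)
  exact this hy

theorem ps_green {p n : ℕ} (hp : p.Prime) (G : Type*) [Group G] (h : Nat.card G = p ^ n) :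
    Nat.card (SchurMultiplier G) ∣ p ^ (n * (n - 1) / 2) := by
  rw [ps_card]
  refine (Subgroup.card_dvd_of_le (inf_le_right)).trans (ps_wiegold hp n (PSU G) ?_)
  refine (Subgroup.index_dvd_of_le (psπ_ker G)).trans ?_
  rw [Subgroup.index_ker, MonoidHom.range_eq_top.2 (psπ_surj G), Subgroup.card_top, h]

end PSU

/- Part 3 : the Heisenberg type group -/

section Heis

/-- `A^ab ⊗ B^ab`. -/
abbrev PST (A B : Type*) [Group A] [Group B] : Type _ :=
  TensorProduct ℤ (Additive (Abelianization A)) (Additive (Abelianization B))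

/-- The pure tensor. -/
def pst {A B : Type*} [Group A] [Group B] (a : A) (b : B) : PST A B :=
  TensorProduct.tmul ℤ (Additive.ofMul (Abelianization.of a)) (Additive.ofMul (Abelianization.of b))

theorem pst_mul_left {A B : Type*} [Group A] [Group B] (a a' : A) (b : B) :
    pst (a * a') b = pst a b + pst a' b := by
  simp [pst, TensorProduct.add_tmul]

theorem pst_mul_right {A B : Type*} [Group A] [Group B] (a : A) (b b' : B) :
    pst a (b * b') = pst a b + pst a b' := by
  simp [pst, TensorProduct.tmul_add]

theorem pst_one_left {A B : Type*} [Group A] [Group B] (b : B) :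
    pst (1 : A) b = 0 := by simp [pst]

theorem pst_one_right {A B : Type*} [Group A] [Group B] (a : A) :
    pst a (1 : B) = 0 := by simp [pst]

theorem pst_inv_left {A B : Type*} [Group A] [Group B] (a : A) (b : B) :
    pst a⁻¹ b = - pst a b := by
  rw [eq_neg_iff_add_eq_zero, ← pst_mul_left, inv_mul_cancel, pst_one_left]

/-- The Heisenberg type group. -/
@[ext]
structure PSHeis (A B : Type*) [Group A] [Group B] where
  /-- first coordinate -/
  a : A
  /-- second coordinate -/
  b : B
  /-- central coordinate -/
  t : PST A B

variable {A B : Type*} [Group A] [Group B]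

instance : Mul (PSHeis A B) := ⟨fun x y => ⟨x.a * y.a, x.b * y.b, x.t + y.t + pst x.a y.b⟩⟩
instance : One (PSHeis A B) := ⟨⟨1, 1, 0⟩⟩
instance : Inv (PSHeis A B) := ⟨fun x => ⟨x.a⁻¹, x.b⁻¹, - x.t + pst x.a x.b⟩⟩

theorem psh_mul (x y : PSHeis A B) :
    x * y = ⟨x.a * y.a, x.b * y.b, x.t + y.t + pst x.a y.b⟩ := rfl
theorem psh_one : (1 : PSHeis A B) = ⟨1, 1, 0⟩ := rfl
theorem psh_inv (x : PSHeis A B) : x⁻¹ = ⟨x.a⁻¹, x.b⁻¹, - x.t + pst x.a x.b⟩ := rfl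

noncomputable instance : Group (PSHeis A B) :=
  Group.ofLeftAxioms
    (by
      intro x y z
      simp only [psh_mul, pst_mul_left, pst_mul_right, mul_assoc]
      congr 1
      abel)
    (by
      intro x
      simp [psh_mul, psh_one, pst_one_left])
    (by
      intro x
      simp [psh_mul, psh_one, psh_inv, pst_inv_left])

/-- The projection to `A × B`. -/
def pshf (A B : Type*) [Group A] [Group B] : PSHeis A B →* A × B where
  toFun x := (x.a, x.b)
  map_one' := rfl
  map_mul' _ _ := rfl

theorem pshf_surj : Function.Surjective (pshf A B) := fun x => ⟨⟨x.1, x.2, 0⟩, rfl⟩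

theorem psh_ker {x : PSHeis A B} (hx : pshf A B x = 1) : x = ⟨1, 1, x.t⟩ := by
  have h1 : x.a = 1 := congrArg Prod.fst hx
  have h2 : x.b = 1 := congrArg Prod.snd hx
  ext
  · exact h1
  · exact h2
  · rfl

theorem pshf_ker : (pshf A B).ker ≤ Subgroup.center (PSHeis A B) := by
  intro x hx
  rw [Subgroup.mem_center_iff]
  intro g
  rw [psh_ker hx]
  simp [psh_mul, pst_one_left, pst_one_right, add_comm]

/-- inclusion of `A` -/
def psha : A →* PSHeis A B where
  toFun a := ⟨a, 1, 0⟩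
  map_one' := rfl
  map_mul' _ _ := by simp [psh_mul, pst_one_right]

/-- inclusion of `B` -/
def pshb : B →* PSHeis A B where
  toFun b := ⟨1, b, 0⟩
  map_one' := rfl
  map_mul' _ _ := by simp [psh_mul, pst_one_left]

/-- inclusion of the tensor product -/
def psht : Multiplicative (PST A B) →* PSHeis A B where
  toFun t := ⟨1, 1, t.toAdd⟩
  map_one' := rfl
  map_mul' _ _ := by simp [psh_mul, pst_one_left]

theorem psh_comm {x y : PSHeis A B} {a : A} {b : B} (hx : pshf A B x = (a, 1))
    (hy : pshf A B y = (1, b)) : ⁅x, y⁆ = ⟨1, 1, pst a b⟩ := by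
  rw [commutatorElement_def, mul_assoc, ← mul_inv_rev, mul_inv_eq_iff_eq_mul]
  have h1 : x.a = a := congrArg Prod.fst hx
  have h2 : x.b = 1 := congrArg Prod.snd hx
  have h3 : y.a = 1 := congrArg Prod.fst hy
  have h4 : y.b = b := congrArg Prod.snd hy
  simp only [psh_mul, h1, h2, h3, h4, pst_one_left]
  simp
  abel

end Heis

/- Part 4 : Schur's product formula -/

section Product

theorem pst_top {A B : Type*} [Group A] [Group B] (P : Subgroup (Multiplicative (PST A B)))
    (h : ∀ a b, Multiplicative.ofAdd (pst a b) ∈ P) (t : Multiplicative (PST A B)) : t ∈ P := by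
  suffices H : ∀ t : PST A B, Multiplicative.ofAdd t ∈ P from H t.toAdd
  intro t
  induction t using TensorProduct.induction_on with
  | zero => exact P.one_mem
  | add a b ha hb => exact P.mul_mem ha hb
  | tmul a b =>
    obtain ⟨a, rfl⟩ := Additive.ofMul.surjective a
    obtain ⟨b, rfl⟩ := Additive.ofMul.surjective b
    obtain ⟨a, rfl⟩ := QuotientGroup.mk_surjective a
    obtain ⟨b, rfl⟩ := QuotientGroup.mk_surjective b
    exact h a b

theorem ps_mapc {Y Z : Type*} [Group Y] [Group Z] (f : Y →* Z) {y : Y} (hy : y ∈ commutator Y) :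
    f y ∈ commutator Z := by
  have h1 : commutator Y ≤ (commutator Z).comap f := by
    rw [commutator_def, Subgroup.commutator_le]
    intro a _ b _
    rw [Subgroup.mem_comap, map_commutatorElement]
    exact Subgroup.commutator_mem_commutator (Subgroup.mem_top _) (Subgroup.mem_top _)
  exact h1 hy

theorem ps_gamma {A B X : Type*} [Group A] [Group B] [Group X] (f : X →* A × B)
    (hf : Function.Surjective f) (hk : f.ker ≤ Subgroup.center X) :
    ∃ γ : Multiplicative (PST A B) →* X, ∀ x y a b, f x = (a, 1) → f y = (1, b) →
      γ (Multiplicative.ofAdd (pst a b)) = ⁅x, y⁆ := by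
  let s := Function.surjInv hf
  have hs : ∀ z, f (s z) = z := Function.surjInv_eq hf
  have hcen : ∀ x y a b, f x = (a, 1) → f y = (1, b) → ⁅x, y⁆ ∈ Subgroup.center X := by
    intro x y a b hx hy
    apply hk
    rw [MonoidHom.mem_ker, map_commutatorElement, hx, hy, commutatorElement_eq_one_iff_mul_comm]
    simp
  let c : A → B → Subgroup.center X := fun a b =>
    ⟨⁅s (a, 1), s (1, b)⁆, hcen _ _ _ _ (hs _) (hs _)⟩
  have hc : ∀ x y a b, f x = (a, 1) → f y = (1, b) → (c a b : X) = ⁅x, y⁆ := by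
    intro x y a b hx hy
    exact ps_comm_eq f hk ((hs _).trans hx.symm) ((hs _).trans hy.symm)
  have hc1 : ∀ a a' b, c (a * a') b = c a b * c a' b := by
    intro a a' b
    ext
    rw [hc (s (a, 1) * s (a', 1)) (s (1, b)) (a * a') b (by simp [hs]) (hs _), Subgroup.coe_mul]
    have h1 := Subgroup.mem_center_iff.1 (c a' b).2
    have h2 : (c a' b : X) = ⁅s (a', 1), s (1, b)⁆ := rfl
    have h3 : (c a b : X) = ⁅s (a, 1), s (1, b)⁆ := rfl
    rw [h1, h3]
    calc ⁅s (a, 1) * s (a', 1), s (1, b)⁆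
        = (s (a, 1) * ⁅s (a', 1), s (1, b)⁆) * s (1, b) * (s (a, 1))⁻¹ * (s (1, b))⁻¹ := by
          simp only [commutatorElement_def]; group
      _ = _ := by
          rw [← h2, h1]; simp only [commutatorElement_def]; group
  have hc2 : ∀ a b b', c a (b * b') = c a b * c a b' := by
    intro a b b'
    ext
    rw [hc (s (a, 1)) (s (1, b) * s (1, b')) a (b * b') (hs _) (by simp [hs]), Subgroup.coe_mul]
    have h1 := Subgroup.mem_center_iff.1 (c a b').2
    have h2 : (c a b' : X) = ⁅s (a, 1), s (1, b')⁆ := rfl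
    have h3 : (c a b : X) = ⁅s (a, 1), s (1, b)⁆ := rfl
    calc ⁅s (a, 1), s (1, b) * s (1, b')⁆
        = ⁅s (a, 1), s (1, b)⁆ * (s (1, b) * ⁅s (a, 1), s (1, b')⁆) * (s (1, b))⁻¹ := by
          simp only [commutatorElement_def]; group
      _ = _ := by
          rw [← h2, h1, h3]; group
  let _ : CommGroup (Subgroup.center X) :=
    { (inferInstance : Group (Subgroup.center X)) with
      mul_comm := fun a b => Subtype.ext (Subgroup.mem_center_iff.1 b.2 a) }
  let L1 : A → (Abelianization B →* Subgroup.center X) := fun a =>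
    Abelianization.lift (MonoidHom.mk' (c a) (hc2 a))
  have hL1 : ∀ a b, L1 a (Abelianization.of b) = c a b := fun a b => by simp [L1]
  let L2 : Abelianization A →* (Abelianization B →* Subgroup.center X) :=
    Abelianization.lift (MonoidHom.mk' L1 (by
      intro a a'
      ext b
      simp only [MonoidHom.comp_apply, MonoidHom.mul_apply, hL1, hc1]))
  have hL2 : ∀ a b, L2 (Abelianization.of a) (Abelianization.of b) = c a b := fun a b => by
    simp [L2, hL1]
  let L3 : Additive (Abelianization A) →+ Additive (Abelianization B) →+
      Additive (Subgroup.center X) :=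
    AddMonoidHom.mk' (fun a => MonoidHom.toAdditive (L2 a.toMul)) (by
      intro a a'
      ext b
      simp)
  let T : PST A B →+ Additive (Subgroup.center X) := TensorProduct.liftAddHom L3 (by
    intro r m n; simp)
  refine ⟨(Subgroup.center X).subtype.comp (AddMonoidHom.toMultiplicativeLeft T), ?_⟩
  intro x y a b hx hy
  rw [← hc x y a b hx hy, ← hL2]
  rfl

theorem ps_product {A B G : Type*} [Group A] [Group B] [Group G] (e : G ≃* A × B) :
    Nat.card (psM G) = Nat.card (psM A) * (Nat.card (psM B) * Nat.card (PST A B)) := by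
  let π : PSU G →* A × B := e.toMonoidHom.comp (psπ G)
  have hπ : ∀ x, π x = e (psπ G x) := fun x => rfl
  have hπs : Function.Surjective π := e.surjective.comp (psπ_surj G)
  have hπk : π.ker = (psπ G).ker := by
    ext x
    simp [MonoidHom.mem_ker, hπ]
  have hπc : π.ker ≤ Subgroup.center (PSU G) := hπk ▸ psπ_ker G
  obtain ⟨α, hα⟩ := ps_lift (MonoidHom.inl A B) π hπs hπc
  obtain ⟨β, hβ⟩ := ps_lift (MonoidHom.inr A B) π hπs hπc
  obtain ⟨ρ, hρ⟩ := ps_lift ((MonoidHom.fst A B).comp e.toMonoidHom) (psπ A) (psπ_surj A)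
    (psπ_ker A)
  obtain ⟨σ, hσ⟩ := ps_lift ((MonoidHom.snd A B).comp e.toMonoidHom) (psπ B) (psπ_surj B)
    (psπ_ker B)
  obtain ⟨h, hh⟩ := ps_lift e.toMonoidHom (pshf A B) pshf_surj pshf_ker
  have hρ' : ∀ u, psπ A (ρ u) = (π u).1 := hρ
  have hσ' : ∀ u, psπ B (σ u) = (π u).2 := hσ
  have hh' : ∀ u, pshf A B (h u) = π u := hh
  have hα' : ∀ u, π (α u) = (psπ A u, 1) := hα
  have hβ' : ∀ u, π (β u) = (1, psπ B u) := hβ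
  obtain ⟨γ, hγ⟩ := ps_gamma π hπs hπc
  -- properties of γ
  have hsec : ∀ a b, ∃ x y, π x = (a, 1) ∧ π y = (1, b) := fun a b =>
    ⟨_, _, (hπs (a, 1)).choose_spec, (hπs (1, b)).choose_spec⟩
  have hγk : ∀ t, γ t ∈ π.ker := by
    intro t
    refine pst_top (π.ker.comap γ) ?_ t
    intro a b
    obtain ⟨x, y, hx, hy⟩ := hsec a b
    rw [Subgroup.mem_comap, hγ x y a b hx hy, MonoidHom.mem_ker, map_commutatorElement, hx, hy,
      commutatorElement_eq_one_iff_mul_comm]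
    simp
  have hγc : ∀ t, γ t ∈ commutator (PSU G) := by
    intro t
    refine pst_top ((commutator (PSU G)).comap γ) ?_ t
    intro a b
    obtain ⟨x, y, hx, hy⟩ := hsec a b
    rw [Subgroup.mem_comap, hγ x y a b hx hy]
    exact Subgroup.commutator_mem_commutator (Subgroup.mem_top _) (Subgroup.mem_top _)
  have hργ : ∀ t, ρ (γ t) = 1 := by
    intro t
    refine pst_top (ρ.ker.comap γ) ?_ t
    intro a b
    obtain ⟨x, y, hx, hy⟩ := hsec a b
    rw [Subgroup.mem_comap, hγ x y a b hx hy, MonoidHom.mem_ker, map_commutatorElement,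
      commutatorElement_eq_one_iff_mul_comm]
    refine Subgroup.mem_center_iff.1 (psπ_ker A ?_) _
    rw [MonoidHom.mem_ker, hρ', hy]
  have hσγ : ∀ t, σ (γ t) = 1 := by
    intro t
    refine pst_top (σ.ker.comap γ) ?_ t
    intro a b
    obtain ⟨x, y, hx, hy⟩ := hsec a b
    rw [Subgroup.mem_comap, hγ x y a b hx hy, MonoidHom.mem_ker, map_commutatorElement,
      commutatorElement_eq_one_iff_mul_comm]
    refine (Subgroup.mem_center_iff.1 (psπ_ker B ?_) _).symm
    rw [MonoidHom.mem_ker, hσ', hx]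
  have hhγ : ∀ t, h (γ t) = psht t := by
    intro t
    refine pst_top ((h.comp γ).eqLocus psht) ?_ t
    intro a b
    obtain ⟨x, y, hx, hy⟩ := hsec a b
    change h (γ _) = _
    rw [hγ x y a b hx hy, map_commutatorElement,
      psh_comm ((hh' x).trans hx) ((hh' y).trans hy)]
    rfl
  -- properties of α and β
  have hαc : ∀ {u}, u ∈ psM A → α u ∈ psM G := by
    intro u hu
    refine Subgroup.mem_inf.2 ⟨?_, ps_mapc α hu.2⟩
    rw [← hπk, MonoidHom.mem_ker, hα', MonoidHom.mem_ker.1 hu.1]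
    rfl
  have hβc : ∀ {u}, u ∈ psM B → β u ∈ psM G := by
    intro u hu
    refine Subgroup.mem_inf.2 ⟨?_, ps_mapc β hu.2⟩
    rw [← hπk, MonoidHom.mem_ker, hβ', MonoidHom.mem_ker.1 hu.1]
    rfl
  have hγM : ∀ t, γ t ∈ psM G := fun t => ⟨hπk ▸ hγk t, hγc t⟩
  have hρα : ∀ {u}, u ∈ psM A → ρ (α u) = u := by
    intro u hu
    refine ps_unique (psπ A) (psπ_ker A) (ρ.comp α) (MonoidHom.id _) ?_ hu.2
    intro y
    simp [hρ', hα']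
  have hρβ : ∀ {u}, u ∈ psM B → ρ (β u) = 1 := by
    intro u hu
    refine ps_unique (psπ A) (psπ_ker A) (ρ.comp β) 1 ?_ hu.2
    intro y
    simp [hρ', hβ']
  have hσα : ∀ {u}, u ∈ psM A → σ (α u) = 1 := by
    intro u hu
    refine ps_unique (psπ B) (psπ_ker B) (σ.comp α) 1 ?_ hu.2
    intro y
    simp [hσ', hα']
  have hσβ : ∀ {u}, u ∈ psM B → σ (β u) = u := by
    intro u hu
    refine ps_unique (psπ B) (psπ_ker B) (σ.comp β) (MonoidHom.id _) ?_ hu.2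
    intro y
    simp [hσ', hβ']
  have hhα : ∀ {u}, u ∈ psM A → h (α u) = 1 := by
    intro u hu
    have h1 : h.comp α u = psha.comp (psπ A) u := by
      refine ps_unique (pshf A B) pshf_ker _ _ ?_ hu.2
      intro y
      simp only [MonoidHom.comp_apply, hh', hα']
      rfl
    rw [MonoidHom.comp_apply, MonoidHom.comp_apply, MonoidHom.mem_ker.1 hu.1, map_one] at h1
    exact h1
  have hhβ : ∀ {u}, u ∈ psM B → h (β u) = 1 := by
    intro u hu
    have h1 : h.comp β u = pshb.comp (psπ B) u := by
      refine ps_unique (pshf A B) pshf_ker _ _ ?_ hu.2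
      intro y
      simp only [MonoidHom.comp_apply, hh', hβ']
      rfl
    rw [MonoidHom.comp_apply, MonoidHom.comp_apply, MonoidHom.mem_ker.1 hu.1, map_one] at h1
    exact h1
  -- joint injectivity
  have hγn : γ.range.Normal := by
    refine ⟨fun b hb g => ?_⟩
    obtain ⟨t, rfl⟩ := hb
    rw [Subgroup.mem_center_iff.1 (hπc (hγk t)) g, mul_inv_cancel_right]
    exact ⟨t, rfl⟩
  have hinj : ∀ {x}, x ∈ psM G → ρ x = 1 → σ x = 1 → h x = 1 → x = 1 := by
    intro x hx h1 h2 h3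
    let q := QuotientGroup.mk' γ.range
    have hqs : Function.Surjective q := QuotientGroup.mk'_surjective _
    have hle : γ.range ≤ π.ker := by
      rintro _ ⟨t, rfl⟩
      exact hγk t
    let f : PSU G ⧸ γ.range →* A × B := QuotientGroup.lift _ π hle
    have hfq : ∀ y, f (q y) = π y := fun y => rfl
    have hfk : f.ker ≤ Subgroup.center _ := by
      intro y hy
      obtain ⟨y, rfl⟩ := hqs y
      rw [Subgroup.mem_center_iff]
      intro g
      obtain ⟨g, rfl⟩ := hqs g
      rw [← map_mul, ← map_mul, Subgroup.mem_center_iff.1 (hπc hy) g]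
    have hcomm : ∀ a b, Commute ((q.comp α) a) ((q.comp β) b) := by
      intro a b
      rw [MonoidHom.comp_apply, MonoidHom.comp_apply, commute_iff_eq,
        ← commutatorElement_eq_one_iff_mul_comm, ← map_commutatorElement,
        ← hγ (α a) (β b) _ _ (hα' a) (hβ' b)]
      exact (QuotientGroup.eq_one_iff _).2 ⟨_, rfl⟩
    let τ : PSU G →* PSU G ⧸ γ.range :=
      ((q.comp α).noncommCoprod (q.comp β) hcomm).comp (ρ.prod σ)
    have hτ : ∀ y, τ y = q (α (ρ y)) * q (β (σ y)) := fun y => rfl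
    have hqx : q x = τ x := by
      refine ps_unique f hfk q τ ?_ hx.2
      intro y
      rw [hτ, map_mul, hfq, hfq, hfq, hα', hβ', hρ', hσ']
      simp
    rw [hτ, h1, h2, map_one, map_one, map_one, map_one, mul_one] at hqx
    obtain ⟨t, rfl⟩ := (QuotientGroup.eq_one_iff _).1 hqx
    rw [hhγ] at h3
    have h4 : t = 1 := congrArg PSHeis.t h3
    rw [h4, map_one]
  -- the bijection
  let θ : psM A × (psM B × PST A B) → psM G := fun w =>
    ⟨α w.1 * β w.2.1 * γ (Multiplicative.ofAdd w.2.2),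
      mul_mem (mul_mem (hαc w.1.2) (hβc w.2.1.2)) (hγM _)⟩
  have hθ : ∀ w, (θ w : PSU G) = α w.1 * β w.2.1 * γ (Multiplicative.ofAdd w.2.2) := fun w => rfl
  have hθρ : ∀ w, ρ (θ w) = w.1 := by
    intro w
    rw [hθ, map_mul, map_mul, hρα w.1.2, hρβ w.2.1.2, hργ, mul_one, mul_one]
  have hθσ : ∀ w, σ (θ w) = w.2.1 := by
    intro w
    rw [hθ, map_mul, map_mul, hσα w.1.2, hσβ w.2.1.2, hσγ, mul_one, one_mul]
  have hθh : ∀ w, h (θ w) = ⟨1, 1, w.2.2⟩ := by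
    intro w
    rw [hθ, map_mul, map_mul, hhα w.1.2, hhβ w.2.1.2, hhγ, one_mul, one_mul]
    rfl
  have hbij : Function.Bijective θ := by
    constructor
    · intro w w' hw
      have e1 := hθρ w
      have e2 := hθσ w
      have e3 := hθh w
      rw [hw, hθρ] at e1
      rw [hw, hθσ] at e2
      rw [hw, hθh] at e3
      have e4 : w'.2.2 = w.2.2 := congrArg PSHeis.t e3
      exact (Prod.ext (Subtype.ext e1) (Prod.ext (Subtype.ext e2) e4)).symm
    · rintro ⟨x, hx⟩
      have hx1 : π x = 1 := by
        have := hx.1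
        rwa [← hπk] at this
      have r1 : ρ x ∈ psM A :=
        Subgroup.mem_inf.2 ⟨by rw [MonoidHom.mem_ker, hρ', hx1]; rfl, ps_mapc ρ hx.2⟩
      have r2 : σ x ∈ psM B :=
        Subgroup.mem_inf.2 ⟨by rw [MonoidHom.mem_ker, hσ', hx1]; rfl, ps_mapc σ hx.2⟩
      let w : psM A × (psM B × PST A B) := (⟨ρ x, r1⟩, ⟨σ x, r2⟩, (h x).t)
      refine ⟨w, Subtype.ext ?_⟩
      rw [← mul_inv_eq_one]
      apply hinj (mul_mem (θ w).2 (inv_mem hx))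
      · rw [map_mul, map_inv, hθρ, mul_inv_eq_one]
      · rw [map_mul, map_inv, hθσ, mul_inv_eq_one]
      · rw [map_mul, map_inv, hθh, mul_inv_eq_one]
        exact (psh_ker ((hh' x).trans hx1)).symm
  rw [← Nat.card_congr (Equiv.ofBijective θ hbij), Nat.card_prod, Nat.card_prod]

end Product

theorem ps_equiv {G : Type*} [Group G] (N K : Subgroup G) [N.Normal] [K.Normal]
    (hinf : N ⊓ K = ⊥) (hsup : N ⊔ K = ⊤) : Nonempty (G ≃* N × K) := by
  have hd : Disjoint N K := disjoint_iff.2 hinf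
  let f : N × K →* G := N.subtype.noncommCoprod K.subtype (fun a b =>
    Subgroup.commute_of_normal_of_disjoint N K inferInstance inferInstance hd a b a.2 b.2)
  have hf : ∀ w, f w = w.1 * w.2 := fun w => rfl
  refine ⟨(MulEquiv.ofBijective f ⟨?_, ?_⟩).symm⟩
  · rw [injective_iff_map_eq_one]
    rintro ⟨a, b⟩ hab
    rw [hf] at hab
    have h1 : (a : G) = (b : G)⁻¹ := eq_inv_of_mul_eq_one_left hab
    have h2 : (a : G) ∈ N ⊓ K := Subgroup.mem_inf.2 ⟨a.2, h1 ▸ inv_mem b.2⟩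
    rw [hinf, Subgroup.mem_bot] at h2
    have h3 : (b : G) = 1 := by
      rw [h2] at h1
      exact (inv_eq_one.1 h1.symm)
    exact Prod.ext (Subtype.ext h2) (Subtype.ext h3)
  · intro g
    have hg : g ∈ N ⊔ K := hsup ▸ Subgroup.mem_top g
    obtain ⟨a, ha, b, hb, rfl⟩ := Subgroup.mem_sup_of_normal_left.1 hg
    exact ⟨(⟨a, ha⟩, ⟨b, hb⟩), rfl⟩

theorem card_pair_schur_multiplier (p n m : ℕ) (hp : p.Prime)
    (G : Type*) [Group G] [Finite G] (hG : IsPGroup p G)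
    (N K : Subgroup G) [N.Normal] [K.Normal]
    (hN : Nat.card N = p ^ n) (hK : Nat.card K = p ^ m)
    (hinf : N ⊓ K = ⊥) (hsup : N ⊔ K = ⊤)
    (MGN : Type*) [Group MGN]
    (hsplit : Nonempty (SchurMultiplier G ≃* MGN × SchurMultiplier K)) :
    Nat.card MGN =
        Nat.card (SchurMultiplier N) *
          Nat.card (TensorProduct ℤ (Additive (Abelianization N))
            (Additive (Abelianization K))) ∧
      Nat.card MGN ∣ p ^ (n * (2 * m + n - 1) / 2) := by
  obtain ⟨e⟩ := ps_equiv N K hinf hsup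
  obtain ⟨s⟩ := hsplit
  have h1 := ps_product e
  rw [← ps_card, ← ps_card, ← ps_card, Nat.card_congr s.toEquiv, Nat.card_prod] at h1
  have hKpos : 0 < Nat.card (SchurMultiplier K) :=
    Nat.pos_of_dvd_of_pos (ps_green hp K hK) (pow_pos hp.pos _)
  have hmain : Nat.card MGN =
        Nat.card (SchurMultiplier N) *
          Nat.card (TensorProduct ℤ (Additive (Abelianization N))
            (Additive (Abelianization K))) := by
    refine Nat.eq_of_mul_eq_mul_right hKpos ?_
    rw [h1]
    ring
  refine ⟨hmain, ?_⟩
  have hNab : Nat.card (Additive (Abelianization N)) ∣ p ^ n := by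
    have h2 : Nat.card (Abelianization N) ∣ Nat.card N :=
      Subgroup.card_dvd_of_surjective (Abelianization.of (G := N)) QuotientGroup.mk_surjective
    rw [hN] at h2
    exact h2
  have hKab : Nat.card (Additive (Abelianization K)) ∣ p ^ m := by
    have h2 : Nat.card (Abelianization K) ∣ Nat.card K :=
      Subgroup.card_dvd_of_surjective (Abelianization.of (G := K)) QuotientGroup.mk_surjective
    rw [hK] at h2
    exact h2
  rw [hmain]
  refine (mul_dvd_mul (ps_green hp N hN)
    ((ps_tensor n p hp _ _ hNab).trans (pow_dvd_pow_of_dvd hKab n))).trans ?_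
  rw [← pow_mul, ← pow_add]
  apply pow_dvd_pow
  have hkey : n * (2 * m + n - 1) = n * (n - 1) + 2 * (m * n) := by
    rcases n with _ | n
    · simp
    · have : 2 * m + (n + 1) - 1 = 2 * m + n := by omega
      rw [this, Nat.add_sub_cancel]; ring
  omega
end
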